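/- arXiv:math/0507148 — 7 statements merged into one kernel-verified Lean document; each statement's English description precedes it below -/
import Mathlib

section
/- Let m ≥ 1 and let k₁ ≥ k₂ ≥ ⋯ ≥ k_m be a nonincreasing sequence of integers with k₁ + k₂ + ⋯ + k_m = 0 and k_m ≤ −2. Then d(k) = Σ_{1 ≤ i < j ≤ m} (k_i − k_j − λ_{ij}) ≥ m + 1. -/
/-- Codimension estimate for strata with some partial index ≤ −2:
if `k` is a nonincreasing sequence of `m ≥ 1` integers summing to `0`
whose last entry is `≤ −2`, then
`d(k) = ∑_{i<j} (kᵢ − kⱼ − λᵢⱼ) ≥ m + 1`, where `λᵢⱼ = 1` if `kᵢ > kⱼ` and `0` otherwise. -/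
theorem stmt_0 (m : ℕ) (hm : 1 ≤ m) (k : ℕ → ℤ)
    (hmono : ∀ i j, i ≤ j → j < m → k j ≤ k i)
    (hsum : ∑ i ∈ Finset.range m, k i = 0)
    (hlast : k (m - 1) ≤ -2) :
    (m : ℤ) + 1 ≤
      ∑ i ∈ Finset.range m, ∑ j ∈ Finset.Ico (i + 1) m,
        (k i - k j - if k j < k i then 1 else 0) := by
  obtain ⟨n, rfl⟩ : ∃ n, m = n + 1 := ⟨m - 1, by omega⟩
  rw [Nat.add_sub_cancel] at hlast
  rw [Finset.sum_range_succ] at hsum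
  -- The pairs involving the last index already give the bound; all other terms are nonnegative.
  have hrow : ∀ i ∈ Finset.range n, k i - k n - 1 ≤
      ∑ j ∈ Finset.Ico (i + 1) (n + 1), (k i - k j - if k j < k i then 1 else 0) := by
    intro i hi
    have hin := Finset.mem_range.mp hi
    calc k i - k n - 1 ≤ k i - k n - if k n < k i then 1 else 0 := by split_ifs <;> omega
      _ ≤ _ := Finset.single_le_sum
        (f := fun j => k i - k j - if k j < k i then 1 else 0) (fun j hj => by
          have hj' := Finset.mem_Ico.mp hj
          have hle := hmono i j (by omega) hj'.2
          split_ifs <;> omega) (Finset.mem_Ico.mpr ⟨by omega, by omega⟩)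
  have hlhs : ∑ i ∈ Finset.range n, (k i - k n - 1) = -k n - n * k n - n := by
    simp only [Finset.sum_sub_distrib, Finset.sum_const, Finset.card_range, nsmul_eq_mul, mul_one]
    linarith
  have hbound := hlhs ▸ Finset.sum_le_sum hrow
  rw [Finset.sum_range_succ, Finset.Ico_self, Finset.sum_empty, add_zero]
  refine le_trans ?_ hbound
  push_cast
  nlinarith [mul_nonneg (Int.natCast_nonneg n) (by linarith : (0 : ℤ) ≤ -2 - k n)]
end

section
/- Let m ≥ 2 and let k₁ ≥ k₂ ≥ ⋯ ≥ k_m be a nonincreasing sequence of integers with k₁ + k₂ + ⋯ + k_m = 0 and k_{m−1} = k_m = −1. Then d(k) = Σ_{1 ≤ i < j ≤ m} (k_i − k_j − λ_{ij}) ≥ 4. -/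
/-- Codimension estimate for strata with (at least) two partial indices equal to −1:
if `k` is a nonincreasing sequence of `m ≥ 2` integers summing to `0`
whose last two entries equal `−1`, then
`d(k) = ∑_{i<j} (kᵢ − kⱼ − λᵢⱼ) ≥ 4`, where `λᵢⱼ = 1` if `kᵢ > kⱼ` and `0` otherwise. -/
theorem stmt_1 (m : ℕ) (hm : 2 ≤ m) (k : ℕ → ℤ)
    (hmono : ∀ i j, i ≤ j → j < m → k j ≤ k i)
    (hsum : ∑ i ∈ Finset.range m, k i = 0)
    (h1 : k (m - 2) = -1) (h2 : k (m - 1) = -1) :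
    (4 : ℤ) ≤
      ∑ i ∈ Finset.range m, ∑ j ∈ Finset.Ico (i + 1) m,
        (k i - k j - if k j < k i then 1 else 0) := by
  obtain ⟨n, rfl⟩ := Nat.exists_eq_add_of_le' hm
  have hn : k n = -1 := h1
  have hn' : k (n + 1) = -1 := h2
  have nonneg : ∀ i j, i ≤ j → j < n + 2 →
      0 ≤ k i - k j - if k j < k i then (1 : ℤ) else 0 := by
    intro i j hij hj
    have := hmono i j hij hj
    split_ifs <;> omega
  have row : ∀ i ∈ Finset.range n, 2 * k i ≤
      ∑ j ∈ Finset.Ico (i + 1) (n + 2), (k i - k j - if k j < k i then 1 else 0) := by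
    intro i hi
    have hi := Finset.mem_range.mp hi
    rw [Finset.sum_Ico_succ_top (by omega), Finset.sum_Ico_succ_top (by omega), hn, hn']
    have hrest : 0 ≤ ∑ j ∈ Finset.Ico (i + 1) n,
        (k i - k j - if k j < k i then (1 : ℤ) else 0) := by
      refine Finset.sum_nonneg fun j hj => ?_
      have hj := Finset.mem_Ico.mp hj
      exact nonneg i j (by omega) (by omega)
    have hlast := hmono i n (by omega) (by omega)
    split_ifs <;> omega
  have hrows := Finset.sum_le_sum row
  rw [← Finset.mul_sum] at hrows
  rw [Finset.sum_range_succ, Finset.sum_range_succ] at hsum ⊢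
  have hrow : Finset.Ico (n + 1) (n + 2) = {n + 1} := Nat.Ico_succ_singleton (n + 1)
  rw [hrow, Finset.sum_singleton, Finset.Ico_self, Finset.sum_empty]
  have := nonneg n (n + 1) (by omega) (by omega)
  omega
end

section
/- Let (X, 𝒜, μ) be a finite measure space and let C > 0. Let g : X → ℝ and f_l : X → ℝ (l ∈ ℕ) be measurable functions with 0 ≤ f_l ≤ C and 0 ≤ g ≤ C almost everywhere, and ∫_X f_l dμ = ∫_X g dμ for every l. Assume that (i) for every bounded measurable h : X → ℝ, ∫_X f_l·h dμ → ∫_X g·h dμ as l → ∞ (weak convergence of f_l to g), and (ii) limsup_{l→∞} ∫_X f_l·log f_l dμ ≤ ∫_X g·log g dμ, where x·log x is taken to be 0 at x = 0. Then ∫_X (f_l − g)² dμ → 0 as l → ∞, i.e. f_l → g strongly in L²(μ). -/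
open MeasureTheory Filter

/-- Quantitative strict convexity of `x ↦ x * log x` on `[0, C]`. -/
theorem sq_sub_div_le_mul_log_sub {C x y : ℝ} (hx : 0 ≤ x) (hxC : x ≤ C) (hy : 0 < y)
    (hyC : y ≤ C) :
    (x - y) ^ 2 / (2 * C) ≤ x * Real.log x - x * Real.log y - x + y := by
  have hC : 0 < C := hy.trans_le hyC
  set F : ℝ → ℝ := fun t => t * Real.log t - t * Real.log y - t + y - (t - y) ^ 2 / (2 * C)
    with hF
  have hFc : Continuous F := by
    have := Real.continuous_mul_log
    fun_prop
  have hd : ∀ t, t ≠ 0 → HasDerivAt F (Real.log t - Real.log y - (t - y) / C) t := by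
    intro t ht
    have h := ((((Real.hasDerivAt_mul_log ht).sub
      ((hasDerivAt_id t).mul_const (Real.log y))).sub (hasDerivAt_id t)).add_const y).sub
      ((((hasDerivAt_id t).sub_const y).pow 2).div_const (2 * C))
    refine h.congr_deriv ?_
    simp only [id]
    field_simp
    ring
  have hlog : ∀ a b : ℝ, 0 < a → a ≤ b → b ≤ C → (b - a) / C ≤ Real.log b - Real.log a := by
    intro a b ha hab hbC
    have hb : 0 < b := ha.trans_le hab
    have h1 := Real.log_le_sub_one_of_pos (div_pos ha hb)
    rw [Real.log_div ha.ne' hb.ne'] at h1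
    have h2 : (b - a) / C ≤ (b - a) / b :=
      div_le_div_of_nonneg_left (sub_nonneg.2 hab) hb hbC
    have h3 : (b - a) / b = 1 - a / b := by field_simp
    linarith
  have hFy : F y = 0 := by simp [hF]
  suffices h : 0 ≤ F x by
    simp only [hF] at h
    linarith
  rw [← hFy]
  rcases le_total x y with hxy | hxy
  · have hanti : AntitoneOn F (Set.Icc 0 y) := by
      refine antitoneOn_of_hasDerivWithinAt_nonpos (convex_Icc 0 y) hFc.continuousOn
        (f' := fun t => Real.log t - Real.log y - (t - y) / C) ?_ ?_
      · intro t ht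
        rw [interior_Icc] at ht
        exact (hd t ht.1.ne').hasDerivWithinAt
      · intro t ht
        rw [interior_Icc] at ht
        have h1 := hlog t y ht.1 ht.2.le hyC
        have h2 : (t - y) / C = -((y - t) / C) := by ring
        linarith
    exact hanti ⟨hx, hxy⟩ ⟨hy.le, le_rfl⟩ hxy
  · have hmono : MonotoneOn F (Set.Icc y C) := by
      refine monotoneOn_of_hasDerivWithinAt_nonneg (convex_Icc y C) hFc.continuousOn
        (f' := fun t => Real.log t - Real.log y - (t - y) / C) ?_ ?_
      · intro t ht
        rw [interior_Icc] at ht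
        exact (hd t (hy.trans ht.1).ne').hasDerivWithinAt
      · intro t ht
        rw [interior_Icc] at ht
        have h1 := hlog y t hy ht.1.le ht.2.le
        linarith
    exact hmono ⟨le_rfl, hyC⟩ ⟨hxy, hxC⟩ hxy

/-- Replacing `b` by its truncation `min (max b ε) C` bounds `(a - b) ^ 2` by an expression that is
linear in `a`, `b`, `a * log a` and `b * log b` up to bounded weights. -/
theorem sq_sub_le_mul_log_sub_truncation {C ε a b : ℝ} (hε : 0 < ε) (hεC : ε ≤ C)
    (ha : 0 ≤ a) (haC : a ≤ C) (hb : 0 ≤ b) (hbC : b ≤ C) :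
    (a - b) ^ 2 ≤ 4 * C * (a * Real.log a - b * Real.log b
      - (a * (1 + Real.log (min (max b ε) C)) - b * (1 + Real.log (min (max b ε) C))))
      + (4 * C * ε + 2 * ε ^ 2) := by
  have hC : 0 < C := hε.trans_le hεC
  rw [min_eq_left (max_le hbC hεC)]
  set c := max b ε
  have hbc : b ≤ c := le_max_left _ _
  have hcε : c ≤ b + ε := max_le (by linarith) (by linarith)
  have hc0 : 0 < c := hε.trans_le (le_max_right _ _)
  have h1 := sq_sub_div_le_mul_log_sub ha haC hc0 (max_le hbC hεC)
  have h2 : b * Real.log b ≤ b * Real.log c := by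
    rcases hb.eq_or_lt with h0 | h0
    · simp [← h0]
    · exact mul_le_mul_of_nonneg_left (Real.log_le_log h0 hbc) hb
  rw [div_le_iff₀ (by positivity)] at h1
  have h3 : (c - b) ^ 2 ≤ ε ^ 2 := pow_le_pow_left₀ (by linarith) (by linarith) 2
  have h4 : (a - b) ^ 2 ≤ 2 * (a - c) ^ 2 + 2 * (c - b) ^ 2 := by
    nlinarith [sq_nonneg (a - c - (c - b))]
  have h5 : 0 ≤ C * (b * Real.log c - b * Real.log b) := mul_nonneg hC.le (by linarith)
  have h6 : 0 ≤ C * (b + ε - c) := mul_nonneg hC.le (by linarith)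
  linarith

/-- Strong convergence lemma for volume forms: on a finite measure space, if
`0 ≤ f_l ≤ C`, `0 ≤ g ≤ C` a.e., all `f_l` have the same integral as `g`,
`f_l → g` weakly (against every bounded measurable test function), and
`limsup ∫ f_l log f_l ≤ ∫ g log g`, then `f_l → g` strongly in `L²`. -/
theorem stmt_5 {X : Type*} [MeasurableSpace X] (μ : Measure X) [IsFiniteMeasure μ]
    (C : ℝ) (hC : 0 < C) (g : X → ℝ) (f : ℕ → X → ℝ)
    (hgm : Measurable g) (hfm : ∀ l, Measurable (f l))
    (hfb : ∀ l, ∀ᵐ x ∂μ, 0 ≤ f l x ∧ f l x ≤ C)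
    (hgb : ∀ᵐ x ∂μ, 0 ≤ g x ∧ g x ≤ C)
    (hint : ∀ l, ∫ x, f l x ∂μ = ∫ x, g x ∂μ)
    (hweak : ∀ h : X → ℝ, Measurable h → (∃ M : ℝ, ∀ x, |h x| ≤ M) →
      Tendsto (fun l => ∫ x, f l x * h x ∂μ) atTop (nhds (∫ x, g x * h x ∂μ)))
    (hent : limsup (fun l => ∫ x, f l x * Real.log (f l x) ∂μ) atTop
        ≤ ∫ x, g x * Real.log (g x) ∂μ) :
    Tendsto (fun l => ∫ x, (f l x - g x) ^ 2 ∂μ) atTop (nhds 0) := by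
  obtain ⟨K, hK⟩ := (isCompact_Icc (a := (0 : ℝ)) (b := C)).exists_bound_of_continuousOn
    Real.continuous_mul_log.continuousOn
  have hφm : ∀ u : X → ℝ, Measurable u → Measurable fun x => u x * Real.log (u x) :=
    fun u hu => hu.mul (Real.measurable_log.comp hu)
  have hφb : ∀ u : X → ℝ, (∀ᵐ x ∂μ, 0 ≤ u x ∧ u x ≤ C) →
      ∀ᵐ x ∂μ, ‖u x * Real.log (u x)‖ ≤ K :=
    fun u hu => hu.mono fun x hx => hK (u x) ⟨hx.1, hx.2⟩
  have hφi : ∀ u : X → ℝ, Measurable u → (∀ᵐ x ∂μ, 0 ≤ u x ∧ u x ≤ C) →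
      Integrable (fun x => u x * Real.log (u x)) μ :=
    fun u hu hub => Integrable.of_bound (hφm u hu).aestronglyMeasurable K (hφb u hub)
  have hui : ∀ u : X → ℝ, Measurable u → (∀ᵐ x ∂μ, 0 ≤ u x ∧ u x ≤ C) → Integrable u μ :=
    fun u hu hub => Integrable.of_bound hu.aestronglyMeasurable C
      (hub.mono fun x hx => by rw [Real.norm_of_nonneg hx.1]; exact hx.2)
  have hbdd : IsBoundedUnder (· ≤ ·) atTop fun l => ∫ x, f l x * Real.log (f l x) ∂μ :=
    isBoundedUnder_of ⟨K * μ.real Set.univ, fun l =>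
      (le_abs_self _).trans (norm_integral_le_of_norm_le_const (hφb _ (hfb l)))⟩
  set m := μ.real Set.univ with hm
  have hbound : ∀ ε : ℝ, 0 < ε → ε ≤ C → ∀ᶠ l in atTop,
      ∫ x, (f l x - g x) ^ 2 ∂μ ≤ 8 * C * ε + (4 * C * ε + 2 * ε ^ 2) * m := by
    intro ε hε hεC
    set h : X → ℝ := fun x => 1 + Real.log (min (max (g x) ε) C) with hh
    have hhm : Measurable h :=
      measurable_const.add (Real.measurable_log.comp ((hgm.max measurable_const).min
        measurable_const))
    have hhb : ∀ x, |h x| ≤ 1 + (|Real.log ε| + |Real.log C|) := by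
      intro x
      have h1 : ε ≤ min (max (g x) ε) C := le_min (le_max_right _ _) hεC
      have h2 := Real.log_le_log hε h1
      have h3 := Real.log_le_log (hε.trans_le h1) (min_le_right (max (g x) ε) C)
      have := neg_abs_le (Real.log ε)
      have := le_abs_self (Real.log C)
      have := abs_nonneg (Real.log ε)
      have := abs_nonneg (Real.log C)
      exact abs_le.2 ⟨by simp only [hh]; linarith, by simp only [hh]; linarith⟩
    have huhi : ∀ u : X → ℝ, Integrable u μ → Integrable (fun x => u x * h x) μ :=
      fun u hu => hu.mul_bdd hhm.aestronglyMeasurable (Eventually.of_forall hhb)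
    have hE := eventually_lt_of_limsup_lt (hent.trans_lt (lt_add_of_pos_right _ hε)) hbdd
    have hW := (hweak h hhm ⟨_, hhb⟩).eventually (lt_mem_nhds (sub_lt_self _ hε))
    filter_upwards [hE, hW] with l hEl hWl
    have hfφ := hφi _ (hfm l) (hfb l)
    have hgφ := hφi _ hgm hgb
    have hfh := huhi _ (hui _ (hfm l) (hfb l))
    have hgh := huhi _ (hui _ hgm hgb)
    have hφsub : Integrable (fun x => f l x * Real.log (f l x) - g x * Real.log (g x)) μ :=
      hfφ.sub hgφ
    have hhsub : Integrable (fun x => f l x * h x - g x * h x) μ := hfh.sub hgh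
    have hsub : Integrable (fun x => 4 * C * (f l x * Real.log (f l x) - g x * Real.log (g x)
        - (f l x * h x - g x * h x))) μ := (hφsub.sub hhsub).const_mul (4 * C)
    calc ∫ x, (f l x - g x) ^ 2 ∂μ
        ≤ ∫ x, (4 * C * (f l x * Real.log (f l x) - g x * Real.log (g x)
            - (f l x * h x - g x * h x)) + (4 * C * ε + 2 * ε ^ 2)) ∂μ := by
          refine integral_mono_of_nonneg (Eventually.of_forall fun x => sq_nonneg _)
            (hsub.add (integrable_const _)) ?_
          filter_upwards [hfb l, hgb] with x hfx hgx
          exact sq_sub_le_mul_log_sub_truncation hε hεC hfx.1 hfx.2 hgx.1 hgx.2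
      _ = 4 * C * ((∫ x, f l x * Real.log (f l x) ∂μ) - (∫ x, g x * Real.log (g x) ∂μ)
            - ((∫ x, f l x * h x ∂μ) - ∫ x, g x * h x ∂μ)) + (4 * C * ε + 2 * ε ^ 2) * m := by
          rw [← integral_sub hfφ hgφ, ← integral_sub hfh hgh,
            ← integral_sub hφsub hhsub, ← integral_const_mul,
            integral_add hsub (integrable_const _), integral_const, smul_eq_mul, ← hm, mul_comm m]
      _ ≤ 4 * C * (2 * ε) + (4 * C * ε + 2 * ε ^ 2) * m := by
          gcongr
          linarith
      _ = 8 * C * ε + (4 * C * ε + 2 * ε ^ 2) * m := by ring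
  have hlim : Tendsto (fun ε : ℝ => 8 * C * ε + (4 * C * ε + 2 * ε ^ 2) * m)
      (nhdsWithin 0 (Set.Ioi 0)) (nhds 0) := by
    have hcont : Continuous fun ε : ℝ => 8 * C * ε + (4 * C * ε + 2 * ε ^ 2) * m := by fun_prop
    simpa using (hcont.tendsto 0).mono_left nhdsWithin_le_nhds
  refine tendsto_order.2 ⟨fun a ha => Eventually.of_forall fun l =>
    ha.trans_le (integral_nonneg fun x => sq_nonneg _), fun a ha => ?_⟩
  obtain ⟨ε, hεa, hε⟩ := ((hlim.eventually (gt_mem_nhds ha)).and (Ioc_mem_nhdsGT hC)).exists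
  exact (hbound ε hε.1 hε.2).mono fun l hl => hl.trans_lt hεa
end

section
/- Let A, B ∈ ℝ and C ≥ 0. Suppose that for every real number l ≥ 1 there exists a function E : ℝ² → ℝ such that, writing R_l = [−l, l] × [0, 1]: (i) E is continuously differentiable on a neighborhood of R_l and |E(s,t)| ≤ C for all (s,t) ∈ R_l; (ii) E(s,0) = A and E(s,1) = B for all s ∈ [−l, l]; (iii) ∂E/∂t(s,0) = 0 for all s ∈ [−l, l]; (iv) E is weakly subharmonic on the interior of R_l, i.e. ∫_{R_l} E·(∂²φ/∂s² + ∂²φ/∂t²) ds dt ≥ 0 for every nonnegative smooth function φ compactly supported in (−l, l) × (0, 1). Then B ≥ A. -/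
open Set

/-- Cutoffs on `(-l, l)` with second derivative `O(l⁻²)`. -/
theorem exists_cutoff_deriv_deriv_le : ∃ K : ℝ, 0 ≤ K ∧ ∀ l : ℝ, 0 < l → ∃ κ : ℝ → ℝ,
    ContDiff ℝ (⊤ : ℕ∞) κ ∧ (∀ s, 0 ≤ κ s) ∧ tsupport κ ⊆ Ioo (-l) l ∧
    l ≤ ∫ s in Icc (-l) l, κ s ∧ ∀ s, |deriv (deriv κ) s| ≤ K / l ^ 2 := by
  let b : ContDiffBump (0 : ℝ) := ⟨1 / 2, 3 / 4, by norm_num, by norm_num⟩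
  have hb : ContDiff ℝ (⊤ : ℕ∞) b := b.contDiff
  have hb' : ContDiff ℝ (⊤ : ℕ∞) (deriv b) :=
    (contDiff_infty_iff_deriv.1 hb).2
  have hb'' : ContDiff ℝ (⊤ : ℕ∞) (deriv (deriv b)) := (contDiff_infty_iff_deriv.1 hb').2
  obtain ⟨K, hK⟩ := hb''.continuous.bounded_above_of_compact_support
    b.hasCompactSupport.deriv.deriv
  refine ⟨K, (norm_nonneg _).trans (hK 0), fun l hl => ?_⟩
  have hκ : ContDiff ℝ (⊤ : ℕ∞) (fun s : ℝ => b (l⁻¹ * s)) :=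
    hb.comp (contDiff_const.mul contDiff_id)
  refine ⟨fun s => b (l⁻¹ * s), hκ, fun s => b.nonneg, ?_, ?_, ?_⟩
  · have : tsupport (fun s : ℝ => b (l⁻¹ * s)) ⊆ Icc (-(3 / 4 * l)) (3 / 4 * l) := by
      refine closure_minimal (fun s hs => ?_) isClosed_Icc
      have h1 : l⁻¹ * s ∈ Function.support b := hs
      rw [b.support_eq, Metric.mem_ball, Real.dist_eq, sub_zero, abs_mul, abs_inv,
        abs_of_pos hl, inv_mul_lt_iff₀ hl] at h1
      have h2 : |s| < 3 / 4 * l := by simpa [b, mul_comm] using h1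
      exact abs_le.1 h2.le
    exact this.trans fun s hs => ⟨by linarith [hs.1], by linarith [hs.2]⟩
  · calc l = ∫ s in Icc (-(l / 2)) (l / 2), (1 : ℝ) := by
          simp [hl.le]
      _ = ∫ s in Icc (-(l / 2)) (l / 2), b (l⁻¹ * s) := by
          refine MeasureTheory.setIntegral_congr_fun measurableSet_Icc fun s hs => ?_
          refine (b.one_of_mem_closedBall ?_).symm
          rw [Metric.mem_closedBall, Real.dist_eq, sub_zero, abs_mul, abs_inv,
            abs_of_pos hl, inv_mul_le_iff₀ hl]
          have := abs_le.2 hs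
          simp only [b]
          linarith
      _ ≤ _ := by
          refine MeasureTheory.setIntegral_mono_set
            (hκ.continuous.integrableOn_Icc) (.of_forall fun s => b.nonneg) ?_
          exact (Icc_subset_Icc (by linarith) (by linarith)).eventuallyLE
  · intro s
    have h1 : deriv (fun s : ℝ => b (l⁻¹ * s)) = fun s => l⁻¹ * deriv b (l⁻¹ * s) := by
      ext s
      exact deriv_comp_mul_left l⁻¹ b s
    have h2 : deriv (fun s : ℝ => deriv b (l⁻¹ * s)) s = l⁻¹ * deriv (deriv b) (l⁻¹ * s) :=
      deriv_comp_mul_left l⁻¹ (deriv b) s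
    rw [h1, deriv_const_mul_field, h2, ← mul_assoc, abs_mul, abs_of_pos (by positivity)]
    calc _ ≤ l⁻¹ * l⁻¹ * K := by gcongr; exact hK _
      _ = K / l ^ 2 := by field_simp

/-- A smooth step from `0` to `1`. -/
theorem exists_smooth_step : ∃ (P : ℝ → ℝ) (K : ℝ), 0 ≤ K ∧ ContDiff ℝ (⊤ : ℕ∞) P ∧
    (∀ x, 0 ≤ P x) ∧ (∀ x, P x ≤ 1) ∧ (∀ x ≤ 1 / 2, P x = 0) ∧ (∀ x, 1 ≤ x → P x = 1) ∧
    (∀ x ∈ Icc (0 : ℝ) 1, |deriv P x| ≤ K) ∧ ∀ x, 1 ≤ x → deriv P x = 0 := by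
  have hP : ContDiff ℝ (⊤ : ℕ∞) (fun x : ℝ => Real.smoothTransition (2 * x - 1)) :=
    Real.smoothTransition.contDiff.comp ((contDiff_const.mul contDiff_id).sub contDiff_const)
  obtain ⟨K, hK⟩ := isCompact_Icc.exists_bound_of_continuousOn (s := Icc (0 : ℝ) 1)
    (contDiff_infty_iff_deriv.1 hP).2.continuous.continuousOn
  refine ⟨_, K, (norm_nonneg _).trans (hK 0 ⟨le_rfl, zero_le_one⟩), hP,
    fun x => Real.smoothTransition.nonneg _, fun x => Real.smoothTransition.le_one _,
    fun x hx => Real.smoothTransition.zero_of_nonpos (by linarith),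
    fun x hx => Real.smoothTransition.one_of_one_le (by linarith), hK, fun x hx => ?_⟩
  refine IsLocalMax.deriv_eq_zero (.of_forall fun y => ?_)
  simp only [Real.smoothTransition.one_of_one_le (show 1 ≤ 2 * x - 1 by linarith)]
  exact Real.smoothTransition.le_one _

/-- Test functions on `(0, 1)` approximating `t ↦ 1 - t`. -/
theorem exists_test_approx_one_sub : ∃ K : ℝ, 0 ≤ K ∧ ∀ δ : ℝ, 0 < δ → δ ≤ 1 / 2 → ∃ ψ : ℝ → ℝ,
    ContDiff ℝ (⊤ : ℕ∞) ψ ∧ (∀ t, 0 ≤ ψ t) ∧ tsupport ψ ⊆ Ioo 0 1 ∧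
    (∀ t ∈ Icc (0 : ℝ) 1, ψ t ≤ 1) ∧
    (∀ t ∈ Icc 0 δ, |deriv ψ t + 1| ≤ K / δ) ∧ (∀ t ∈ Icc δ (1 - δ), deriv ψ t + 1 = 0) ∧
    ∀ t ∈ Icc (1 - δ) 1, |deriv ψ t + 1| ≤ K := by
  obtain ⟨P, K, hK, hP, hP0, hP1, hPz, hPo, hPK, hP'⟩ := exists_smooth_step
  refine ⟨K + 1, by positivity, fun δ hδ hδ2 => ?_⟩
  have hd (t : ℝ) : HasDerivAt (fun t => P (t / δ) * ((1 - t) * P ((1 - t) / δ)))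
      (deriv P (t / δ) / δ * ((1 - t) * P ((1 - t) / δ)) +
        P (t / δ) * (-P ((1 - t) / δ) - (1 - t) / δ * deriv P ((1 - t) / δ))) t := by
    have hPd (x : ℝ) : HasDerivAt P (deriv P x) x :=
      (hP.differentiable (by simp) x).hasDerivAt
    have h1 : HasDerivAt (fun t => P (t / δ)) (deriv P (t / δ) * (1 / δ)) t :=
      (hPd (t / δ)).comp t ((hasDerivAt_id t).div_const δ)
    have h0 : HasDerivAt (fun t : ℝ => 1 - t) (-1) t := (hasDerivAt_id t).const_sub 1
    have h2 : HasDerivAt (fun t => P ((1 - t) / δ)) (deriv P ((1 - t) / δ) * (-1 / δ)) t :=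
      (hPd ((1 - t) / δ)).comp t (h0.div_const δ)
    refine (h1.fun_mul (h0.fun_mul h2)).congr_deriv ?_
    ring
  refine ⟨fun t => P (t / δ) * ((1 - t) * P ((1 - t) / δ)), ?_, fun t => ?_, ?_, fun t ht => ?_,
    fun t ht => ?_, fun t ht => ?_, fun t ht => ?_⟩
  · have h0 : ContDiff ℝ (⊤ : ℕ∞) (fun t : ℝ => 1 - t) := contDiff_const.sub contDiff_id
    exact (hP.comp (contDiff_id.div_const δ)).mul (h0.mul (hP.comp (h0.div_const δ)))
  · rcases le_total t 1 with h | h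
    · exact mul_nonneg (hP0 _) (mul_nonneg (by linarith) (hP0 _))
    · have : P ((1 - t) / δ) = 0 := hPz _ <| by rw [div_le_iff₀ hδ]; linarith
      simp [this]
  · have : tsupport (fun t => P (t / δ) * ((1 - t) * P ((1 - t) / δ))) ⊆
        Icc (δ / 2) (1 - δ / 2) := by
      refine closure_minimal (fun t ht => ?_) isClosed_Icc
      have h : P (t / δ) * ((1 - t) * P ((1 - t) / δ)) ≠ 0 := ht
      by_contra hc
      rw [mem_Icc, not_and_or, not_le, not_le] at hc
      rcases hc with hc | hc
      · exact h (by rw [hPz (t / δ) (by rw [div_le_iff₀ hδ]; linarith), zero_mul])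
      · exact h (by rw [hPz ((1 - t) / δ) (by rw [div_le_iff₀ hδ]; linarith)]; ring)
    exact this.trans fun s hs => ⟨by linarith [hs.1], by linarith [hs.2]⟩
  · exact mul_le_one₀ (hP1 _) (mul_nonneg (by linarith [ht.2]) (hP0 _))
      (mul_le_one₀ (by linarith [ht.1]) (hP0 _) (hP1 _))
  · have h1 : 1 ≤ (1 - t) / δ := by rw [le_div_iff₀ hδ]; linarith [ht.2]
    have h2 := hPK (t / δ) ⟨div_nonneg ht.1 hδ.le, (div_le_one hδ).2 ht.2⟩
    rw [(hd t).deriv, hPo _ h1, hP' _ h1]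
    have h3 : |deriv P (t / δ) / δ * (1 - t)| ≤ K / δ := by
      rw [abs_mul, abs_div, abs_of_pos hδ, abs_of_nonneg (by linarith [ht.2] : 0 ≤ 1 - t)]
      calc _ ≤ K / δ * 1 :=
            mul_le_mul (by gcongr) (by linarith [ht.1]) (by linarith [ht.2]) (by positivity)
        _ = _ := mul_one _
    have h4 : (1 : ℝ) ≤ 1 / δ := by rw [le_div_iff₀ hδ]; linarith
    have h5 := hP0 (t / δ)
    have h6 := hP1 (t / δ)
    rw [add_div]
    rw [abs_le] at h3 ⊢
    constructor <;> nlinarith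
  · have h1 : 1 ≤ (1 - t) / δ := by rw [le_div_iff₀ hδ]; linarith [ht.2]
    have h2 : 1 ≤ t / δ := by rw [le_div_iff₀ hδ]; linarith [ht.1]
    rw [(hd t).deriv, hPo _ h1, hP' _ h1, hPo _ h2, hP' _ h2]
    ring
  · have h1 : 1 ≤ t / δ := by rw [le_div_iff₀ hδ]; linarith [ht.1]
    have h7 : (1 - t) / δ ≤ 1 := by rw [div_le_one hδ]; linarith [ht.1]
    have h8 : 0 ≤ (1 - t) / δ := div_nonneg (by linarith [ht.2]) hδ.le
    have h2 := hPK ((1 - t) / δ) ⟨h8, h7⟩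
    rw [(hd t).deriv, hPo _ h1, hP' _ h1, zero_div, zero_mul, zero_add, one_mul]
    have h3 : |(1 - t) / δ * deriv P ((1 - t) / δ)| ≤ K := by
      rw [abs_mul, abs_of_nonneg h8]
      calc _ ≤ 1 * K := by gcongr
        _ = _ := one_mul _
    have h5 := hP0 ((1 - t) / δ)
    have h6 := hP1 ((1 - t) / δ)
    rw [abs_le] at h3 ⊢
    constructor <;> linarith

/-- The function `ψ''` acts on `e` like the functional `e ↦ e 1 - e 0`, if `ψ' + 1` is concentrated
near the endpoints and `e'` is small near `0`. -/
theorem integral_mul_deriv_deriv_le {e e' ψ : ℝ → ℝ} {δ ε K L : ℝ} (hδ : 0 < δ) (hδ2 : δ ≤ 1 / 2)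
    (he : ∀ t ∈ Icc (0 : ℝ) 1, HasDerivAt e (e' t) t)
    (he' : ContinuousOn e' (Icc 0 1)) (hε : ∀ t ∈ Icc 0 δ, |e' t| ≤ ε)
    (hL : ∀ t ∈ Icc (0 : ℝ) 1, |e' t| ≤ L) (hψ : ContDiff ℝ (⊤ : ℕ∞) ψ)
    (hsupp : tsupport ψ ⊆ Ioo 0 1) (h₀ : ∀ t ∈ Icc 0 δ, |deriv ψ t + 1| ≤ K / δ)
    (h₁ : ∀ t ∈ Icc δ (1 - δ), deriv ψ t + 1 = 0)
    (h₂ : ∀ t ∈ Icc (1 - δ) 1, |deriv ψ t + 1| ≤ K) :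
    ∫ t in (0 : ℝ)..1, e t * deriv (deriv ψ) t ≤ e 1 - e 0 + K * (ε + L * δ) := by
  have hψ' : ContDiff ℝ (⊤ : ℕ∞) (deriv ψ) := (contDiff_infty_iff_deriv.1 hψ).2
  have hψ'' : Continuous (deriv (deriv ψ)) := (contDiff_infty_iff_deriv.1 hψ').2.continuous
  have hz (t : ℝ) (ht : t ∉ Ioo (0 : ℝ) 1) : deriv ψ t = 0 := by
    by_contra h
    exact ht (hsupp (support_deriv_subset h))
  have hu : uIcc (0 : ℝ) 1 = Icc 0 1 := uIcc_of_le zero_le_one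
  have hei : IntervalIntegrable e' MeasureTheory.volume 0 1 :=
    (hu ▸ he').intervalIntegrable
  have hparts := intervalIntegral.integral_mul_deriv_eq_deriv_mul (a := 0) (b := 1)
    (u := e) (u' := e') (v := deriv ψ) (v' := deriv (deriv ψ)) (by rwa [hu])
    (fun t _ => (hψ'.differentiable (by simp) t).hasDerivAt) hei (hψ''.intervalIntegrable _ _)
  have hftc := intervalIntegral.integral_eq_sub_of_hasDerivAt (a := 0) (b := 1) (f := e) (f' := e')
    (by rwa [hu]) hei
  have hg : ContinuousOn (fun t => e' t * (deriv ψ t + 1)) (Icc 0 1) :=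
    he'.mul (hψ'.continuous.add continuous_const).continuousOn
  have hgi {a b : ℝ} (ha : 0 ≤ a) (hab : a ≤ b) (hb : b ≤ 1) :
      IntervalIntegrable (fun t => e' t * (deriv ψ t + 1)) MeasureTheory.volume a b :=
    (hg.mono (by rw [uIcc_of_le hab]; exact Icc_subset_Icc ha hb)).intervalIntegrable
  have hsum : ∫ t in (0 : ℝ)..1, e' t * (deriv ψ t + 1) =
      (∫ t in (0 : ℝ)..1, e' t * deriv ψ t) + ∫ t in (0 : ℝ)..1, e' t := by
    rw [← intervalIntegral.integral_add _ hei]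
    · simp only [mul_add, mul_one]
    · exact (hu ▸ he'.mul hψ'.continuous.continuousOn :
        ContinuousOn (fun t => e' t * deriv ψ t) (uIcc 0 1)).intervalIntegrable
  have hsplit : ∫ t in (0 : ℝ)..1, e' t * (deriv ψ t + 1) =
      (∫ t in (0 : ℝ)..δ, e' t * (deriv ψ t + 1)) +
      (∫ t in δ..(1 - δ), e' t * (deriv ψ t + 1)) +
      ∫ t in (1 - δ)..1, e' t * (deriv ψ t + 1) := by
    rw [intervalIntegral.integral_add_adjacent_intervals,
      intervalIntegral.integral_add_adjacent_intervals] <;> apply hgi <;> linarith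
  have hleft : |∫ t in (0 : ℝ)..δ, e' t * (deriv ψ t + 1)| ≤ ε * (K / δ) * |δ - 0| := by
    rw [← Real.norm_eq_abs]
    refine intervalIntegral.norm_integral_le_of_norm_le_const fun t ht => ?_
    rw [uIoc_of_le hδ.le] at ht
    have ht' := Ioc_subset_Icc_self ht
    rw [norm_mul]
    exact mul_le_mul (hε t ht') (h₀ t ht') (abs_nonneg _) ((abs_nonneg _).trans (hε t ht'))
  have hmid : ∫ t in δ..(1 - δ), e' t * (deriv ψ t + 1) = 0 := by
    refine intervalIntegral.integral_zero_ae (.of_forall fun t ht => ?_)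
    rw [uIoc_of_le (by linarith)] at ht
    rw [h₁ t (Ioc_subset_Icc_self ht), mul_zero]
  have hright : |∫ t in (1 - δ)..1, e' t * (deriv ψ t + 1)| ≤ L * K * |1 - (1 - δ)| := by
    rw [← Real.norm_eq_abs]
    refine intervalIntegral.norm_integral_le_of_norm_le_const fun t ht => ?_
    rw [uIoc_of_le (by linarith)] at ht
    have ht' : t ∈ Icc (0 : ℝ) 1 := ⟨by linarith [ht.1], ht.2⟩
    rw [norm_mul]
    exact mul_le_mul (hL t ht') (h₂ t (Ioc_subset_Icc_self ht)) (abs_nonneg _)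
      ((abs_nonneg _).trans (hL t ht'))
  rw [sub_zero, abs_of_pos hδ, mul_assoc, div_mul_cancel₀ _ hδ.ne'] at hleft
  rw [sub_sub_cancel, abs_of_pos hδ] at hright
  rw [hparts, hz 1 (by simp), hz 0 (by simp)]
  linarith [neg_le_of_abs_le hleft, neg_le_of_abs_le hright]

theorem fderiv_fst_mul_snd {κ ψ : ℝ → ℝ} (hκ : Differentiable ℝ κ) (hψ : Differentiable ℝ ψ)
    (p v : ℝ × ℝ) : fderiv ℝ (fun q : ℝ × ℝ => κ q.1 * ψ q.2) p v =
      deriv κ p.1 * v.1 * ψ p.2 + κ p.1 * (deriv ψ p.2 * v.2) := by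
  have h1 : HasFDerivAt (fun q : ℝ × ℝ => κ q.1) _ p :=
    (hκ p.1).hasDerivAt.hasFDerivAt.comp p hasFDerivAt_fst
  have h2 : HasFDerivAt (fun q : ℝ × ℝ => ψ q.2) _ p :=
    (hψ p.2).hasDerivAt.hasFDerivAt.comp p hasFDerivAt_snd
  rw [(h1.fun_mul h2).fderiv]
  simp
  ring

theorem laplacian_fst_mul_snd {κ ψ : ℝ → ℝ} (hκ : ContDiff ℝ (⊤ : ℕ∞) κ)
    (hψ : ContDiff ℝ (⊤ : ℕ∞) ψ) (p : ℝ × ℝ) :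
    fderiv ℝ (fun q => fderiv ℝ (fun q : ℝ × ℝ => κ q.1 * ψ q.2) q (1, 0)) p (1, 0) +
      fderiv ℝ (fun q => fderiv ℝ (fun q : ℝ × ℝ => κ q.1 * ψ q.2) q (0, 1)) p (0, 1) =
      deriv (deriv κ) p.1 * ψ p.2 + κ p.1 * deriv (deriv ψ) p.2 := by
  have dκ := hκ.differentiable (by simp)
  have dψ := hψ.differentiable (by simp)
  have dκ' := (contDiff_infty_iff_deriv.1 hκ).2.differentiable (by simp)
  have dψ' := (contDiff_infty_iff_deriv.1 hψ).2.differentiable (by simp)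
  simp only [fderiv_fst_mul_snd dκ dψ, mul_one, mul_zero, zero_mul, add_zero, zero_add,
    fderiv_fst_mul_snd dκ' dψ, fderiv_fst_mul_snd dκ dψ']

theorem tsupport_fst_mul_snd_subset (κ ψ : ℝ → ℝ) :
    tsupport (fun q : ℝ × ℝ => κ q.1 * ψ q.2) ⊆ tsupport κ ×ˢ tsupport ψ := by
  refine closure_minimal (fun q hq => ?_) ((isClosed_tsupport κ).prod (isClosed_tsupport ψ))
  exact ⟨subset_tsupport κ (left_ne_zero_of_mul hq), subset_tsupport ψ (right_ne_zero_of_mul hq)⟩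

/-- A continuous function on a strip `[-l, l] × [0, 1]` vanishing on the bottom edge is uniformly
small near that edge. -/
theorem exists_abs_le_of_eq_zero_on_bottom {l ε m : ℝ} {D : ℝ × ℝ → ℝ} (hε : 0 < ε) (hm : 0 < m)
    (hD : ContinuousOn D (Icc (-l) l ×ˢ Icc (0 : ℝ) 1))
    (h0 : ∀ s ∈ Icc (-l) l, D (s, 0) = 0) :
    ∃ δ, 0 < δ ∧ δ ≤ 1 / 2 ∧ δ ≤ m ∧ ∀ s ∈ Icc (-l) l, ∀ t ∈ Icc 0 δ, |D (s, t)| ≤ ε := by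
  have huc := (isCompact_Icc.prod isCompact_Icc).uniformContinuousOn_of_continuous hD
  obtain ⟨η, hη, h⟩ := Metric.uniformContinuousOn_iff.1 huc ε hε
  refine ⟨min (η / 2) (min (1 / 2) m), by positivity, (min_le_right _ _).trans (min_le_left _ _),
    (min_le_right _ _).trans (min_le_right _ _), fun s hs t ht => ?_⟩
  have ht1 : t ≤ η / 2 := ht.2.trans (min_le_left _ _)
  have ht2 : t ≤ 1 / 2 := ht.2.trans ((min_le_right _ _).trans (min_le_left _ _))
  have := h (s, t) ⟨hs, ht.1, by linarith⟩ (s, 0) ⟨hs, le_rfl, zero_le_one⟩ (by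
    rw [Prod.dist_eq, dist_self, Real.dist_eq, sub_zero, abs_of_nonneg ht.1]
    exact max_lt hη (by linarith))
  rw [h0 s hs, Real.dist_eq, sub_zero] at this
  exact this.le


/-- Abstract form of minimality of the K-energy at a critical boundary value:
if for every `l ≥ 1` there is a bounded `C¹` function `E` on (a neighborhood of)
the rectangle `R_l = [−l,l] × [0,1]`, equal to `A` on the bottom edge and to `B`
on the top edge, with vanishing normal derivative on the bottom edge, and weakly
subharmonic in the interior, then `B ≥ A`. -/
theorem stmt_7 (A B C : ℝ) (hC : 0 ≤ C)
    (h : ∀ l : ℝ, 1 ≤ l → ∃ (E : ℝ × ℝ → ℝ) (U : Set (ℝ × ℝ)),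
      IsOpen U ∧ (Icc (-l) l ×ˢ Icc (0:ℝ) 1) ⊆ U ∧
      ContDiffOn ℝ 1 E U ∧
      (∀ p ∈ Icc (-l) l ×ˢ Icc (0:ℝ) 1, |E p| ≤ C) ∧
      (∀ s ∈ Icc (-l) l, E (s, 0) = A) ∧
      (∀ s ∈ Icc (-l) l, E (s, 1) = B) ∧
      (∀ s ∈ Icc (-l) l, fderiv ℝ E (s, 0) (0, 1) = 0) ∧
      (∀ φ : ℝ × ℝ → ℝ, ContDiff ℝ (⊤ : ℕ∞) φ → (∀ p, 0 ≤ φ p) →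
        tsupport φ ⊆ Ioo (-l) l ×ˢ Ioo (0:ℝ) 1 →
        0 ≤ ∫ p in Icc (-l) l ×ˢ Icc (0:ℝ) 1,
          E p * (fderiv ℝ (fun q => fderiv ℝ φ q (1, 0)) p (1, 0)
               + fderiv ℝ (fun q => fderiv ℝ φ q (0, 1)) p (0, 1)))) :
    A ≤ B := by
  obtain ⟨K₁, hK₁, hcut⟩ := exists_cutoff_deriv_deriv_le
  obtain ⟨K₂, hK₂, htest⟩ := exists_test_approx_one_sub
  by_contra! hAB
  set d := A - B with hd
  have hd0 : 0 < d := by linarith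
  obtain ⟨l, hl1, hl⟩ : ∃ l : ℝ, 1 ≤ l ∧ 4 * (C * K₁) < d * l := by
    refine ⟨1 + 4 * (C * K₁) / d, by simp; positivity, ?_⟩
    rw [mul_add, mul_div_cancel₀ _ hd0.ne']
    linarith
  have hl0 : 0 < l := by linarith
  obtain ⟨E, U, hU, hRU, hE, hEC, hEA, hEB, hE0, hsub⟩ := h l hl1
  obtain ⟨κ, hκ, hκ0, hκs, hκl, hκ2⟩ := hcut l hl0
  set D : ℝ × ℝ → ℝ := fun p => fderiv ℝ E p (0, 1)
  have hD : ContinuousOn D (Icc (-l) l ×ˢ Icc (0 : ℝ) 1) :=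
    ((hE.continuousOn_fderiv_of_isOpen hU le_rfl).mono hRU).clm_apply continuousOn_const
  have hEd (s : ℝ) (hs : s ∈ Icc (-l) l) (t : ℝ) (ht : t ∈ Icc (0 : ℝ) 1) :
      HasDerivAt (fun t => E (s, t)) (D (s, t)) t :=
    HasFDerivAt.comp_hasDerivAt t ((hE.differentiableOn (by simp)).differentiableAt
      (hU.mem_nhds (hRU ⟨hs, ht⟩))).hasFDerivAt ((hasDerivAt_const t s).prodMk (hasDerivAt_id t))
  obtain ⟨L, hL⟩ := (isCompact_Icc.prod isCompact_Icc).exists_bound_of_continuousOn hD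
  have hL0 : 0 ≤ L := (norm_nonneg _).trans
    (hL (0, 0) ⟨⟨by simpa using hl0.le, hl0.le⟩, le_rfl, zero_le_one⟩)
  obtain ⟨δ, hδ, hδ2, hδm, hDδ⟩ := exists_abs_le_of_eq_zero_on_bottom
    (ε := d / (4 * (K₂ + 1))) (m := d / (4 * (K₂ + 1) * (L + 1))) (by positivity) (by positivity)
    hD hE0
  have herr : K₂ * (d / (4 * (K₂ + 1)) + L * δ) ≤ d / 2 := by
    have h1 : L * δ ≤ d / (4 * (K₂ + 1)) := by
      calc L * δ ≤ (L + 1) * (d / (4 * (K₂ + 1) * (L + 1))) := by gcongr; linarith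
        _ = _ := by field_simp
    calc _ ≤ (K₂ + 1) * (d / (4 * (K₂ + 1)) + d / (4 * (K₂ + 1))) := by gcongr; linarith
      _ = d / 2 := by field_simp; norm_num
  obtain ⟨ψ, hψ, hψ0, hψs, hψ1, hψa, hψb, hψc⟩ := htest δ hδ hδ2
  have hκ'' : Continuous (deriv (deriv κ)) :=
    (contDiff_infty_iff_deriv.1 (contDiff_infty_iff_deriv.1 hκ).2).2.continuous
  have hψ'' : Continuous (deriv (deriv ψ)) :=
    (contDiff_infty_iff_deriv.1 (contDiff_infty_iff_deriv.1 hψ).2).2.continuous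
  have hpos := hsub (fun q => κ q.1 * ψ q.2)
    ((hκ.comp contDiff_fst).mul (hψ.comp contDiff_snd)) (fun p => mul_nonneg (hκ0 _) (hψ0 _))
    ((tsupport_fst_mul_snd_subset κ ψ).trans (prod_mono hκs hψs))
  simp only [laplacian_fst_mul_snd hκ hψ] at hpos
  have hEcont : ContinuousOn E (Icc (-l) l ×ˢ Icc (0 : ℝ) 1) := hE.continuousOn.mono hRU
  have hint : MeasureTheory.IntegrableOn
      (fun p : ℝ × ℝ => E p * (deriv (deriv κ) p.1 * ψ p.2 + κ p.1 * deriv (deriv ψ) p.2))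
      (Icc (-l) l ×ˢ Icc (0 : ℝ) 1) (MeasureTheory.volume.prod MeasureTheory.volume) := by
    refine ContinuousOn.integrableOn_compact (isCompact_Icc.prod isCompact_Icc) (hEcont.mul ?_)
    exact (((hκ''.comp continuous_fst).mul (hψ.continuous.comp continuous_snd)).add
      ((hκ.continuous.comp continuous_fst).mul (hψ''.comp continuous_snd))).continuousOn
  rw [MeasureTheory.Measure.volume_eq_prod, MeasureTheory.setIntegral_prod _ hint] at hpos
  have hslice (s : ℝ) (hs : s ∈ Icc (-l) l) :
      ∫ t in Icc (0 : ℝ) 1, E (s, t) * (deriv (deriv κ) s * ψ t + κ s * deriv (deriv ψ) t) ≤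
        -(d / 2) * κ s + C * (K₁ / l ^ 2) := by
    have hc : ContinuousOn (fun t => E (s, t)) (Icc 0 1) :=
      fun t ht => (hEd s hs t ht).continuousAt.continuousWithinAt
    have hu : uIcc (0 : ℝ) 1 = Icc 0 1 := uIcc_of_le zero_le_one
    rw [MeasureTheory.integral_Icc_eq_integral_Ioc, ← intervalIntegral.integral_of_le zero_le_one]
    have hsplit : ∫ t in (0 : ℝ)..1,
        E (s, t) * (deriv (deriv κ) s * ψ t + κ s * deriv (deriv ψ) t) =
        (∫ t in (0 : ℝ)..1, E (s, t) * (deriv (deriv κ) s * ψ t)) +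
          κ s * ∫ t in (0 : ℝ)..1, E (s, t) * deriv (deriv ψ) t := by
      rw [← intervalIntegral.integral_const_mul, ← intervalIntegral.integral_add]
      · exact intervalIntegral.integral_congr fun t _ => by ring
      · refine ContinuousOn.intervalIntegrable ?_
        rw [hu]
        exact hc.mul (continuous_const.mul hψ.continuous).continuousOn
      · refine ContinuousOn.intervalIntegrable ?_
        rw [hu]
        exact continuousOn_const.mul (hc.mul hψ''.continuousOn)
    have hfirst : ‖∫ t in (0 : ℝ)..1, E (s, t) * (deriv (deriv κ) s * ψ t)‖ ≤
        C * (K₁ / l ^ 2) * |1 - 0| := by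
      refine intervalIntegral.norm_integral_le_of_norm_le_const fun t ht => ?_
      rw [uIoc_of_le zero_le_one] at ht
      have ht' := Ioc_subset_Icc_self ht
      rw [norm_mul, norm_mul, Real.norm_of_nonneg (hψ0 t)]
      refine mul_le_mul (hEC _ ⟨hs, ht'⟩) ?_ (by have := hψ0 t; positivity) hC
      exact (mul_le_of_le_one_right (norm_nonneg _) (hψ1 t ht')).trans (hκ2 s)
    have hsecond := integral_mul_deriv_deriv_le (e := fun t => E (s, t))
      (e' := fun t => D (s, t)) hδ hδ2 (hEd s hs)
      (hD.comp (by fun_prop) fun t ht => ⟨hs, ht⟩) (hDδ s hs) (fun t ht => hL _ ⟨hs, ht⟩)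
      hψ hψs hψa hψb hψc
    simp only [hEA s hs, hEB s hs] at hsecond
    have hmul := mul_le_mul_of_nonneg_left
      (hsecond.trans (show _ ≤ -(d / 2) by linarith)) (hκ0 s)
    rw [sub_zero, abs_one, mul_one] at hfirst
    rw [hsplit]
    linarith [(le_abs_self _).trans hfirst]
  have hle := hpos.trans (MeasureTheory.setIntegral_mono_on
    (f := fun s => ∫ t in Icc (0 : ℝ) 1,
      E (s, t) * (deriv (deriv κ) s * ψ t + κ s * deriv (deriv ψ) t))
    (g := fun s => -(d / 2) * κ s + C * (K₁ / l ^ 2)) ?_ ?_ measurableSet_Icc hslice)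
  · rw [MeasureTheory.integral_add (hκ.continuous.integrableOn_Icc.const_mul _)
      (MeasureTheory.integrable_const _), MeasureTheory.integral_const_mul] at hle
    simp only [MeasureTheory.setIntegral_const, Real.volume_real_Icc, smul_eq_mul] at hle
    rw [max_eq_left (by linarith)] at hle
    have h1 : (l - -l) * (C * (K₁ / l ^ 2)) = 2 * (C * K₁) / l := by field_simp; ring
    have h2 : d / 2 * l ≤ 2 * (C * K₁) / l := by nlinarith
    rw [le_div_iff₀ hl0] at h2
    nlinarith [mul_pos hd0 hl0]
  · rw [MeasureTheory.IntegrableOn, ← MeasureTheory.Measure.prod_restrict] at hint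
    exact hint.integral_prod_left
  · exact ((continuous_const.mul hκ.continuous).add continuous_const).integrableOn_Icc
end

section
/- There exists a constant c₀ > 0 with the following property. For all real numbers l ≥ 1 and C ≥ 0 and every function E : ℝ² → ℝ that is twice continuously differentiable on a neighborhood of R_l = [−l, l] × [0, 1] and satisfies: ΔE := ∂²E/∂s² + ∂²E/∂t² ≥ 0 on R_l, |E| ≤ C on R_l, and ∂E/∂t(s,0) = ∂E/∂t(s,1) = 0 for all s ∈ [−l, l]; one has ∫_{[−l/2, l/2] × [0,1]} ΔE ds dt ≤ c₀·C / l. -/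
open Set MeasureTheory

/-- The directional derivative of a `C^(n+1)` function on an open set is `C^n`. -/
theorem ContDiffOn.fderiv_apply_const_of_isOpen {V : Type*} [NormedAddCommGroup V]
    [NormedSpace ℝ V] {F : V → ℝ} {U : Set V} {m n : WithTop ℕ∞}
    (hF : ContDiffOn ℝ n F U) (hU : IsOpen U) (hmn : m + 1 ≤ n) (v : V) :
    ContDiffOn ℝ m (fun q => fderiv ℝ F q v) U :=
  (hF.fderiv_of_isOpen hU hmn).clm_apply contDiffOn_const

theorem hasDerivAt_prodMk_left_of_differentiableAt {F : ℝ × ℝ → ℝ} {s t : ℝ}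
    (hF : DifferentiableAt ℝ F (s, t)) :
    HasDerivAt (fun x => F (x, t)) (fderiv ℝ F (s, t) (1, 0)) s :=
  hF.hasFDerivAt.comp_hasDerivAt s ((hasDerivAt_id s).prodMk (hasDerivAt_const s t))

theorem hasDerivAt_prodMk_right_of_differentiableAt {F : ℝ × ℝ → ℝ} {s t : ℝ}
    (hF : DifferentiableAt ℝ F (s, t)) :
    HasDerivAt (fun y => F (s, y)) (fderiv ℝ F (s, t) (0, 1)) t :=
  hF.hasFDerivAt.comp_hasDerivAt t ((hasDerivAt_const t s).prodMk (hasDerivAt_id t))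

/-- A polynomial cutoff on `[-l, l]` vanishing to second order at the endpoints. -/
noncomputable def quarticCutoff (l s : ℝ) : ℝ := (1 - (s / l) ^ 2) ^ 2

theorem continuous_quarticCutoff (l : ℝ) : Continuous (quarticCutoff l) := by
  unfold quarticCutoff
  fun_prop

theorem quarticCutoff_nonneg (l s : ℝ) : 0 ≤ quarticCutoff l s := sq_nonneg _

theorem one_le_mul_quarticCutoff {l s : ℝ} (hl : 0 < l) (hs : s ∈ Icc (-l / 2) (l / 2)) :
    1 ≤ 16 / 9 * quarticCutoff l s := by
  have h1 : s / l ≤ 1 / 2 := by rw [div_le_iff₀ hl]; linarith [hs.2]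
  have h2 : -(1 / 2) ≤ s / l := by rw [le_div_iff₀ hl]; linarith [hs.1]
  have h3 : (s / l) ^ 2 ≤ 1 / 4 := by nlinarith
  unfold quarticCutoff
  nlinarith

/-- Integrating by parts twice against the cutoff costs a factor `16 / l`. -/
theorem integral_quarticCutoff_mul_le {l C : ℝ} (hl : 0 < l) {f f' f'' : ℝ → ℝ}
    (hf : ∀ s ∈ Icc (-l) l, HasDerivAt f (f' s) s)
    (hf' : ∀ s ∈ Icc (-l) l, HasDerivAt f' (f'' s) s)
    (hf'' : ContinuousOn f'' (Icc (-l) l)) (hC : ∀ s ∈ Icc (-l) l, |f s| ≤ C) :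
    ∫ s in (-l)..l, quarticCutoff l s * f'' s ≤ 16 * C / l := by
  have hll : -l ≤ l := by linarith
  have hfc : ContinuousOn f (Icc (-l) l) := fun s hs => (hf s hs).continuousAt.continuousWithinAt
  set ψ : ℝ → ℝ := fun s => (12 * (s / l) ^ 2 - 4) / l ^ 2 with hψ
  have hψc : Continuous ψ := by rw [hψ]; fun_prop
  have hi₁ : IntervalIntegrable (fun s => quarticCutoff l s * f'' s) volume (-l) l :=
    ((continuous_quarticCutoff l).continuousOn.mul hf'').intervalIntegrable_of_Icc hll
  have hi₂ : IntervalIntegrable (fun s => ψ s * f s) volume (-l) l :=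
    (hψc.continuousOn.mul hfc).intervalIntegrable_of_Icc hll
  have hparts : ∫ s in (-l)..l, (quarticCutoff l s * f'' s - ψ s * f s) = 0 := by
    rw [intervalIntegral.integral_eq_sub_of_hasDerivAt
      (f := fun s => quarticCutoff l s * f' s - (-4 * (s / l) * (1 - (s / l) ^ 2) / l) * f s)
      _ (hi₁.sub hi₂)]
    · simp [quarticCutoff, hl.ne']
    · intro s hs
      rw [uIcc_of_le hll] at hs
      have hu : HasDerivAt (fun x : ℝ => x / l) (1 / l) s := (hasDerivAt_id s).div_const l
      have hp := ((hu.fun_pow 2).const_sub 1)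
      have h := ((hp.fun_pow 2).fun_mul (hf' s hs)).fun_sub
        ((((hu.const_mul (-4)).fun_mul hp).div_const l).fun_mul (hf s hs))
      refine h.congr_deriv ?_
      simp only [hψ, quarticCutoff]
      push_cast
      ring
  rw [intervalIntegral.integral_sub hi₁ hi₂, sub_eq_zero] at hparts
  rw [hparts]
  have hbound : ∀ s ∈ uIoc (-l) l, ‖ψ s * f s‖ ≤ 8 / l ^ 2 * C := by
    intro s hs
    rw [uIoc_of_le hll] at hs
    have hs' := Ioc_subset_Icc_self hs
    have h1 : s / l ≤ 1 := by rw [div_le_iff₀ hl]; linarith [hs'.2]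
    have h2 : -1 ≤ s / l := by rw [le_div_iff₀ hl]; linarith [hs'.1]
    have h3 : (s / l) ^ 2 ≤ 1 := by nlinarith
    rw [norm_mul, Real.norm_eq_abs, Real.norm_eq_abs]
    refine mul_le_mul ?_ (hC s hs') (abs_nonneg _) (by positivity)
    rw [hψ, abs_div, abs_of_pos (pow_pos hl 2)]
    gcongr
    rw [abs_le]
    constructor <;> nlinarith [sq_nonneg (s / l)]
  calc ∫ s in (-l)..l, ψ s * f s ≤ ‖∫ s in (-l)..l, ψ s * f s‖ := Real.le_norm_self _
    _ ≤ 8 / l ^ 2 * C * |l - -l| := intervalIntegral.norm_integral_le_of_norm_le_const hbound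
    _ = 16 * C / l := by
      rw [sub_neg_eq_add, abs_of_pos (by linarith)]
      field_simp
      ring

/-- The K-energy is approximately harmonic (abstract form): there is a universal
constant `c₀ > 0` such that whenever `E` is `C²` near the rectangle
`R_l = [−l,l] × [0,1]` (`l ≥ 1`), with `ΔE ≥ 0` and `|E| ≤ C` on `R_l`, and
`∂E/∂t = 0` on both horizontal edges, then
`∫_{[−l/2,l/2]×[0,1]} ΔE ≤ c₀·C/l`. -/
theorem stmt_8 :
    ∃ c₀ : ℝ, 0 < c₀ ∧
      ∀ (l C : ℝ), 1 ≤ l → 0 ≤ C →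
        ∀ (E : ℝ × ℝ → ℝ) (U : Set (ℝ × ℝ)),
          IsOpen U → (Icc (-l) l ×ˢ Icc (0:ℝ) 1) ⊆ U →
          ContDiffOn ℝ 2 E U →
          (∀ p ∈ Icc (-l) l ×ˢ Icc (0:ℝ) 1,
            0 ≤ fderiv ℝ (fun q => fderiv ℝ E q (1, 0)) p (1, 0)
              + fderiv ℝ (fun q => fderiv ℝ E q (0, 1)) p (0, 1)) →
          (∀ p ∈ Icc (-l) l ×ˢ Icc (0:ℝ) 1, |E p| ≤ C) →
          (∀ s ∈ Icc (-l) l, fderiv ℝ E (s, 0) (0, 1) = 0) →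
          (∀ s ∈ Icc (-l) l, fderiv ℝ E (s, 1) (0, 1) = 0) →
          (∫ p in Icc (-l/2) (l/2) ×ˢ Icc (0:ℝ) 1,
              (fderiv ℝ (fun q => fderiv ℝ E q (1, 0)) p (1, 0)
               + fderiv ℝ (fun q => fderiv ℝ E q (0, 1)) p (0, 1)))
            ≤ c₀ * C / l := by
  refine ⟨256 / 9, by norm_num, ?_⟩
  intro l C hl _ E U hU hRU hE hΔ hC h0 h1
  have hl0 : 0 < l := by linarith
  have hll : -l ≤ l := by linarith
  have hDs := hE.fderiv_apply_const_of_isOpen (m := 1) hU (by norm_num) (1, 0)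
  have hDt := hE.fderiv_apply_const_of_isOpen (m := 1) hU (by norm_num) (0, 1)
  have hDss := ((hDs.fderiv_apply_const_of_isOpen (m := 0) hU (by norm_num)
    (1, 0)).continuousOn).mono hRU
  have hDtt := ((hDt.fderiv_apply_const_of_isOpen (m := 0) hU (by norm_num)
    (0, 1)).continuousOn).mono hRU
  have hdE : ∀ p ∈ Icc (-l) l ×ˢ Icc (0:ℝ) 1, DifferentiableAt ℝ E p := fun p hp =>
    (hE.contDiffAt (hU.mem_nhds (hRU hp))).differentiableAt (by norm_num)
  have hdDs : ∀ p ∈ Icc (-l) l ×ˢ Icc (0:ℝ) 1,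
      DifferentiableAt ℝ (fun q => fderiv ℝ E q (1, 0)) p := fun p hp =>
    (hDs.contDiffAt (hU.mem_nhds (hRU hp))).differentiableAt (by norm_num)
  have hdDt : ∀ p ∈ Icc (-l) l ×ˢ Icc (0:ℝ) 1,
      DifferentiableAt ℝ (fun q => fderiv ℝ E q (0, 1)) p := fun p hp =>
    (hDt.contDiffAt (hU.mem_nhds (hRU hp))).differentiableAt (by norm_num)
  set Ess : ℝ × ℝ → ℝ := fun p => fderiv ℝ (fun q => fderiv ℝ E q (1, 0)) p (1, 0)
  set Ett : ℝ × ℝ → ℝ := fun p => fderiv ℝ (fun q => fderiv ℝ E q (0, 1)) p (0, 1)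
  change ∫ p in Icc (-l / 2) (l / 2) ×ˢ Icc (0:ℝ) 1, (Ess p + Ett p) ≤ _
  have hcut : Continuous fun p : ℝ × ℝ => quarticCutoff l p.1 :=
    (continuous_quarticCutoff l).comp continuous_fst
  have hK : IsCompact (Icc (-l) l ×ˢ Icc (0:ℝ) 1) := isCompact_Icc.prod isCompact_Icc
  have hiss : IntegrableOn (fun p : ℝ × ℝ => quarticCutoff l p.1 * Ess p)
      (Icc (-l) l ×ˢ Icc (0:ℝ) 1) := (hcut.continuousOn.mul hDss).integrableOn_compact hK
  have hitt : IntegrableOn (fun p : ℝ × ℝ => quarticCutoff l p.1 * Ett p)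
      (Icc (-l) l ×ˢ Icc (0:ℝ) 1) := (hcut.continuousOn.mul hDtt).integrableOn_compact hK
  have hsub : Icc (-l / 2) (l / 2) ×ˢ Icc (0:ℝ) 1 ⊆ Icc (-l) l ×ˢ Icc (0:ℝ) 1 :=
    prod_mono (Icc_subset_Icc (by linarith) (by linarith)) subset_rfl
  have hsum : IntegrableOn (fun p : ℝ × ℝ => 16 / 9 *
      (quarticCutoff l p.1 * Ess p + quarticCutoff l p.1 * Ett p))
      (Icc (-l) l ×ˢ Icc (0:ℝ) 1) := (hiss.add hitt).const_mul _
  have hmeas : MeasurableSet (Icc (-l) l ×ˢ Icc (0:ℝ) 1) := hK.measurableSet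
  have htt : ∫ p in Icc (-l) l ×ˢ Icc (0:ℝ) 1, quarticCutoff l p.1 * Ett p = 0 := by
    rw [Measure.volume_eq_prod] at hitt ⊢
    rw [setIntegral_prod _ hitt]
    refine setIntegral_eq_zero_of_forall_eq_zero fun s hs => ?_
    have hint : ∫ t in (0:ℝ)..1, Ett (s, t) = 0 := by
      rw [intervalIntegral.integral_eq_sub_of_hasDerivAt
        (f := fun t => fderiv ℝ E (s, t) (0, 1)), h0 s hs, h1 s hs, sub_zero]
      · intro t ht
        rw [uIcc_of_le zero_le_one] at ht
        exact hasDerivAt_prodMk_right_of_differentiableAt (hdDt (s, t) ⟨hs, ht⟩)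
      · refine ContinuousOn.intervalIntegrable_of_Icc zero_le_one ?_
        exact hDtt.comp (by fun_prop) fun t ht => ⟨hs, ht⟩
    dsimp only
    rw [integral_const_mul, integral_Icc_eq_integral_Ioc,
      ← intervalIntegral.integral_of_le zero_le_one, hint, mul_zero]
  have hss : ∫ p in Icc (-l) l ×ˢ Icc (0:ℝ) 1, quarticCutoff l p.1 * Ess p ≤ 16 * C / l := by
    rw [IntegrableOn, Measure.volume_eq_prod, ← Measure.prod_restrict] at hiss
    rw [Measure.volume_eq_prod, ← Measure.prod_restrict, integral_prod_symm _ hiss]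
    calc ∫ t in Icc (0:ℝ) 1, ∫ s in Icc (-l) l, quarticCutoff l s * Ess (s, t)
        ≤ ∫ _ in Icc (0:ℝ) 1, 16 * C / l := by
          refine setIntegral_mono_on hiss.integral_prod_right (by simp) measurableSet_Icc
            fun t ht => ?_
          rw [integral_Icc_eq_integral_Ioc, ← intervalIntegral.integral_of_le hll]
          exact integral_quarticCutoff_mul_le hl0
            (fun s hs => hasDerivAt_prodMk_left_of_differentiableAt (hdE (s, t) ⟨hs, ht⟩))
            (fun s hs => hasDerivAt_prodMk_left_of_differentiableAt (hdDs (s, t) ⟨hs, ht⟩))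
            (hDss.comp (by fun_prop) fun s hs => ⟨hs, ht⟩) (fun s hs => hC (s, t) ⟨hs, ht⟩)
      _ = 16 * C / l := by simp
  calc ∫ p in Icc (-l / 2) (l / 2) ×ˢ Icc (0:ℝ) 1, (Ess p + Ett p)
      ≤ ∫ p in Icc (-l / 2) (l / 2) ×ˢ Icc (0:ℝ) 1,
          16 / 9 * (quarticCutoff l p.1 * Ess p + quarticCutoff l p.1 * Ett p) := by
        refine setIntegral_mono_on
          (((hDss.add hDtt).integrableOn_compact hK).mono_set hsub) (hsum.mono_set hsub)
          (measurableSet_Icc.prod measurableSet_Icc) fun p hp => ?_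
        have h := le_mul_of_one_le_left (hΔ p (hsub hp)) (one_le_mul_quarticCutoff hl0 hp.1)
        linarith
    _ ≤ ∫ p in Icc (-l) l ×ˢ Icc (0:ℝ) 1,
          16 / 9 * (quarticCutoff l p.1 * Ess p + quarticCutoff l p.1 * Ett p) := by
        refine setIntegral_mono_set hsum ?_ hsub.eventuallyLE
        filter_upwards [ae_restrict_mem hmeas] with p hp
        have h := mul_nonneg (quarticCutoff_nonneg l p.1) (hΔ p hp)
        rw [mul_add] at h
        exact mul_nonneg (by norm_num) h
    _ ≤ 256 / 9 * C / l := by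
        rw [integral_const_mul, integral_add hiss hitt, htt, add_zero]
        calc _ ≤ 16 / 9 * (16 * C / l) := by gcongr
          _ = 256 / 9 * C / l := by ring
end

section
/- Let S = { z ∈ ℂ : 0 < Im z < 1 } be the open strip and S̄ its closure. Let u : ℂ → ℝ be continuous on S̄, twice continuously differentiable on S and harmonic there (D²u(z)(1,1) + D²u(z)(i,i) = 0 for all z ∈ S), with u ≤ 0 on S̄ and u(z) = 0 whenever Im z = 0 or Im z = 1. If ∫_S e^{−u(z)} / (1 + (Re z)²) dA(z) < ∞ (integration with respect to planar Lebesgue measure), then u ≡ 0 on S̄. -/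
open MeasureTheory

namespace InnerProductSpace

open Real

/-- A function which is `C²` near `z` with vanishing sum of pure second directional derivatives is
harmonic. -/
theorem harmonicAt_of_fderiv_fderiv {u : ℂ → ℝ} {S : Set ℂ} (hS : IsOpen S)
    (hsmooth : ContDiffOn ℝ 2 u S)
    (hharm : ∀ z ∈ S,
      fderiv ℝ (fun w => fderiv ℝ u w 1) z 1
        + fderiv ℝ (fun w => fderiv ℝ u w Complex.I) z Complex.I = 0) {z : ℂ} (hz : z ∈ S) :
    HarmonicAt u z := by
  refine ⟨hsmooth.contDiffAt (hS.mem_nhds hz), ?_⟩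
  filter_upwards [hS.mem_nhds hz] with w hw
  have hd : DifferentiableAt ℝ (fderiv ℝ u) w :=
    ((hsmooth.contDiffAt (hS.mem_nhds hw)).fderiv_right (m := 1) (by norm_num)).differentiableAt
      (by norm_num)
  have h := hharm w hw
  rw [fderiv_clm_apply hd (by fun_prop), fderiv_clm_apply hd (by fun_prop)] at h
  simpa [laplacian_eq_iteratedFDeriv_complexPlane, iteratedFDeriv_two_apply] using h

/-- A real harmonic function with a local maximum is locally constant there. -/
theorem HarmonicAt.eventually_eq_of_isLocalMax {f : ℂ → ℝ} {z : ℂ} (hf : HarmonicAt f z)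
    (hmax : IsLocalMax f z) : ∀ᶠ w in nhds z, f w = f z := by
  obtain ⟨r, hr, hball⟩ := Metric.eventually_nhds_iff_ball.1 hf.eventually
  obtain ⟨g, hg, hre⟩ := HarmonicOnNhd.exists_analyticOnNhd_ball_re_eq (f := f) (z := z) (R := r)
    (fun w hw => hball w hw)
  have hnorm : ∀ w ∈ Metric.ball z r, ‖Complex.exp (g w)‖ = Real.exp (f w) := by
    intro w hw
    rw [Complex.norm_exp, ← hre hw]
  have hmem := Metric.ball_mem_nhds z hr
  have hmax' : IsLocalMax (norm ∘ fun w => Complex.exp (g w)) z := by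
    filter_upwards [hmax, hmem] with w hw hwr
    simpa [hnorm w hwr, hnorm z (Metric.mem_ball_self hr)] using hw
  have hd : ∀ᶠ w in nhds z, DifferentiableAt ℂ (fun w => Complex.exp (g w)) w := by
    filter_upwards [hmem] with w hw
    exact (hg w hw).differentiableAt.cexp
  filter_upwards [Complex.norm_eventually_eq_of_isLocalMax hd hmax', hmem] with w hw hwr
  rw [hnorm w hwr, hnorm z (Metric.mem_ball_self hr)] at hw
  exact Real.exp_injective hw

/-- Maximum principle for harmonic functions on a compact set. -/
theorem HarmonicAt.nonpos_of_nonpos_diff {f : ℂ → ℝ} {K U : Set ℂ} (hK : IsCompact K)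
    (hU : IsOpen U) (hUK : U ⊆ K) (hcont : ContinuousOn f K) (hf : ∀ z ∈ U, HarmonicAt f z)
    (hbd : ∀ z ∈ K \ U, f z ≤ 0) : ∀ z ∈ K, f z ≤ 0 := by
  by_contra! h
  obtain ⟨z₀, hz₀, hpos⟩ := h
  obtain ⟨z₁, hz₁, hmax⟩ := hK.exists_isMaxOn ⟨z₀, hz₀⟩ hcont
  have hM : 0 < f z₁ := hpos.trans_le (hmax hz₀)
  have hc : IsCompact (K ∩ f ⁻¹' {f z₁}) :=
    hK.of_isClosed_subset (hcont.preimage_isClosed_of_isClosed hK.isClosed isClosed_singleton)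
      Set.inter_subset_left
  obtain ⟨z₂, ⟨hz₂, hz₂'⟩, hre⟩ :=
    hc.exists_isMaxOn ⟨z₁, hz₁, rfl⟩ Complex.continuous_re.continuousOn
  have hz₂e : f z₂ = f z₁ := hz₂'
  have hzU : z₂ ∈ U := by
    by_contra hn
    linarith [hbd z₂ ⟨hz₂, hn⟩]
  have hloc : IsLocalMax f z₂ := by
    filter_upwards [hU.mem_nhds hzU] with w hw
    rw [hz₂e]
    exact hmax (hUK hw)
  have hev := ((hf z₂ hzU).eventually_eq_of_isLocalMax hloc).and (hU.mem_nhds hzU)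
  obtain ⟨r, hr, hball⟩ := Metric.eventually_nhds_iff_ball.1 hev
  have hw : z₂ + ((r / 2 : ℝ) : ℂ) ∈ Metric.ball z₂ r := by
    simp [abs_of_pos hr, hr]
  obtain ⟨h1, h2⟩ := hball _ hw
  have := hre ⟨hUK h2, h1.trans hz₂e⟩
  simp at this
  linarith

/-- Jensen's inequality on circles for the exponential of a harmonic function. -/
theorem HarmonicOnNhd.exp_le_circleAverage_exp {f : ℂ → ℝ} {c : ℂ} {r : ℝ}
    (hf : HarmonicOnNhd f (Metric.closedBall c |r|)) :
    exp (f c) ≤ circleAverage (fun w => exp (f w)) c r := by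
  have hc : ContinuousOn f (Metric.sphere c |r|) :=
    hf.continuousOn.mono Metric.sphere_subset_closedBall
  have hi : CircleIntegrable f c r := hc.circleIntegrable'
  have h1 : circleAverage (fun w => exp (f c) * (1 - f c) + exp (f c) * f w) c r = exp (f c) := by
    have := circleAverage_fun_add (f₁ := fun _ => exp (f c) * (1 - f c))
      (f₂ := fun w => exp (f c) • f w) (circleIntegrable_const _ c r) (hi.const_fun_smul)
    simp only [smul_eq_mul] at this
    rw [this, circleAverage_const]
    have h2 := circleAverage_fun_smul (f := f) (a := exp (f c)) (c := c) (R := r)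
    simp only [smul_eq_mul] at h2
    rw [h2, hf.circleAverage_eq]
    ring
  rw [← h1]
  refine circleAverage_mono (ContinuousOn.circleIntegrable' (by fun_prop))
    (ContinuousOn.circleIntegrable' hc.rexp) fun w _ => ?_
  have h3 : exp (f w) = exp (f c) * exp (f w - f c) := by rw [← exp_add]; ring_nf
  rw [h3]
  nlinarith [add_one_le_exp (f w - f c), exp_pos (f c)]

/-- Area sub-mean value property of the exponential of a harmonic function. -/
theorem HarmonicOnNhd.exp_mul_le_lintegral_ball {f : ℂ → ℝ} {c : ℂ} {d : ℝ} (hd : 0 < d)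
    (hf : HarmonicOnNhd f (Metric.ball c d)) :
    ENNReal.ofReal (π * d ^ 2 * exp (f c)) ≤
      ∫⁻ w in Metric.ball c d, ENNReal.ofReal (exp (f w)) := by
  have hmap : ∀ r ∈ Set.Ioo 0 d, ∀ θ, circleMap c r θ ∈ Metric.ball c d := by
    intro r hr θ
    simp [circleMap, abs_of_pos hr.1, hr.2]
  have hpolar : ∀ p : ℝ × ℝ, c + Complex.polarCoord.symm p = circleMap c p.1 p.2 := by
    intro p
    rw [Complex.polarCoord_symm_apply, circleMap, Complex.exp_mul_I]
    norm_cast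
  have hcirc : ∀ r ∈ Set.Ioo 0 d, ENNReal.ofReal (2 * π * exp (f c)) ≤
      ∫⁻ θ in Set.Ioo (-π) π, ENNReal.ofReal (exp (f (circleMap c r θ))) := by
    intro r hr
    have hsub : Metric.closedBall c |r| ⊆ Metric.ball c d :=
      Metric.closedBall_subset_ball (by rw [abs_of_pos hr.1]; exact hr.2)
    have hJ := (hf.mono hsub).exp_le_circleAverage_exp
    have hcont : Continuous fun θ => exp (f (circleMap c r θ)) :=
      continuous_exp.comp (hf.continuousOn.comp_continuous (continuous_circleMap c r) (hmap r hr))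
    rw [circleAverage_eq_integral_add (-π),
      intervalIntegral.integral_comp_add_right (fun θ => exp (f (circleMap c r θ)))] at hJ
    rw [← ofReal_integral_eq_lintegral_ofReal
      ((hcont.integrableOn_Icc (a := -π) (b := π)).mono_set Set.Ioo_subset_Icc_self)
      (Filter.Eventually.of_forall fun _ => (exp_pos _).le)]
    apply ENNReal.ofReal_le_ofReal
    rw [← integral_Ioc_eq_integral_Ioo,
      ← intervalIntegral.integral_of_le (by linarith [pi_pos])]
    have e1 : (0 : ℝ) + -π = -π := by ring
    have e2 : 2 * π + -π = π := by ring
    rw [e1, e2, smul_eq_mul, ← div_eq_inv_mul, le_div_iff₀ (by positivity)] at hJ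
    linarith
  have hmeas : AEMeasurable (fun p : ℝ × ℝ => ENNReal.ofReal p.1 *
      ENNReal.ofReal (exp (f (circleMap c p.1 p.2))))
      ((volume.restrict (Set.Ioo 0 d)).prod (volume.restrict (Set.Ioo (-π) π))) := by
    rw [Measure.prod_restrict]
    refine (by fun_prop : Measurable fun p : ℝ × ℝ => ENNReal.ofReal p.1).aemeasurable.mul
      (AEMeasurable.ennreal_ofReal (ContinuousOn.aemeasurable ?_
        (measurableSet_Ioo.prod measurableSet_Ioo)))
    refine (hf.continuousOn.comp (Continuous.continuousOn ?_) fun p hp => hmap _ hp.1 _).rexp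
    unfold circleMap
    fun_prop
  calc ENNReal.ofReal (π * d ^ 2 * exp (f c))
      = ∫⁻ r in Set.Ioo 0 d, ENNReal.ofReal r * ENNReal.ofReal (2 * π * exp (f c)) := by
        rw [lintegral_mul_const _ (by fun_prop),
          ← ofReal_integral_eq_lintegral_ofReal (f := fun r => r)
            ((continuous_id.integrableOn_Icc (a := 0) (b := d)).mono_set Set.Ioo_subset_Icc_self)
            ((ae_restrict_mem measurableSet_Ioo).mono fun r hr => hr.1.le),
          ← integral_Ioc_eq_integral_Ioo, ← intervalIntegral.integral_of_le hd.le,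
          ← ENNReal.ofReal_mul]
        · rw [integral_id]
          congr 1
          ring
        · rw [integral_id]
          nlinarith
    _ ≤ ∫⁻ r in Set.Ioo 0 d, ∫⁻ θ in Set.Ioo (-π) π,
          ENNReal.ofReal r * ENNReal.ofReal (exp (f (circleMap c r θ))) := by
        refine setLIntegral_mono' measurableSet_Ioo fun r hr => ?_
        rw [lintegral_const_mul' _ _ ENNReal.ofReal_ne_top]
        gcongr
        exact hcirc r hr
    _ = ∫⁻ p in Set.Ioo 0 d ×ˢ Set.Ioo (-π) π,
          ENNReal.ofReal p.1 * ENNReal.ofReal (exp (f (circleMap c p.1 p.2))) := by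
        rw [Measure.volume_eq_prod, ← Measure.prod_restrict, lintegral_prod _ hmeas]
    _ = ∫⁻ p in Set.Ioo 0 d ×ˢ Set.Ioo (-π) π, ENNReal.ofReal p.1 •
          (Metric.ball c d).indicator (fun w => ENNReal.ofReal (exp (f w)))
            (c + Complex.polarCoord.symm p) := by
        refine setLIntegral_congr_fun (measurableSet_Ioo.prod measurableSet_Ioo) fun p hp => ?_
        simp only [hpolar, Set.indicator_of_mem (hmap _ hp.1 p.2), smul_eq_mul]
    _ ≤ ∫⁻ p in polarCoord.target, ENNReal.ofReal p.1 •
          (Metric.ball c d).indicator (fun w => ENNReal.ofReal (exp (f w)))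
            (c + Complex.polarCoord.symm p) := by
        refine lintegral_mono_set ?_
        rw [polarCoord_target]
        exact Set.prod_mono_left Set.Ioo_subset_Ioi_self
    _ = ∫⁻ w in Metric.ball c d, ENNReal.ofReal (exp (f w)) := by
        rw [Complex.lintegral_comp_polarCoord_symm (fun w =>
          (Metric.ball c d).indicator (fun w => ENNReal.ofReal (exp (f w))) (c + w)),
          lintegral_add_left_eq_self, lintegral_indicator measurableSet_ball]

/-- Pointwise bound, with logarithmic blow-up at the boundary, for a harmonic function on the strip
whose exponential is integrable with respect to the weight `1 / (1 + (Re z)²)`. -/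
theorem HarmonicOnNhd.le_log_of_integrableOn_strip {v : ℂ → ℝ}
    (hv : HarmonicOnNhd v {z : ℂ | 0 < z.im ∧ z.im < 1})
    (hint : IntegrableOn (fun z : ℂ => exp (v z) / (1 + z.re ^ 2)) {z : ℂ | 0 < z.im ∧ z.im < 1}) :
    ∃ M > 0, ∀ z : ℂ, 0 < z.im → z.im < 1 →
      v z ≤ log (M * (1 + (|z.re| + 1) ^ 2)) - 2 * log z.im - 2 * log (1 - z.im) := by
  set S : Set ℂ := {z : ℂ | 0 < z.im ∧ z.im < 1}
  set I := ∫ z in S, exp (v z) / (1 + z.re ^ 2)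
  have hI : 0 ≤ I := integral_nonneg fun z => by positivity
  refine ⟨I + 1, by positivity, fun z hz0 hz1 => ?_⟩
  obtain ⟨d, hd, hd0, hd1, hlog⟩ : ∃ d > 0, d ≤ z.im ∧ d ≤ 1 - z.im ∧
      log z.im + log (1 - z.im) ≤ log d := by
    have h1 := log_nonpos hz0.le hz1.le
    have h2 := log_nonpos (sub_nonneg.2 hz1.le) (by linarith : 1 - z.im ≤ 1)
    rcases le_total z.im (1 - z.im) with h | h
    · exact ⟨z.im, hz0, le_rfl, h, by linarith⟩
    · exact ⟨1 - z.im, by linarith, h, le_rfl, by linarith⟩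
  have hball : ∀ w ∈ Metric.ball z d, w ∈ S ∧ |w.re| ≤ |z.re| + 1 := by
    intro w hw
    rw [Metric.mem_ball, Complex.dist_eq] at hw
    have him := abs_lt.1 ((Complex.abs_im_le_norm (w - z)).trans_lt hw)
    have hre := ((Complex.abs_re_le_norm (w - z)).trans_lt hw).le
    have htri := abs_sub_abs_le_abs_sub w.re z.re
    simp only [Complex.sub_im, Complex.sub_re] at him hre
    exact ⟨⟨by linarith, by linarith⟩, by linarith⟩
  set B := 1 + (|z.re| + 1) ^ 2
  have hB : 0 < B := by positivity
  have harea : π * d ^ 2 * exp (v z) ≤ B * I := by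
    rw [← ENNReal.ofReal_le_ofReal_iff (by positivity)]
    calc ENNReal.ofReal (π * d ^ 2 * exp (v z))
        ≤ ∫⁻ w in Metric.ball z d, ENNReal.ofReal (exp (v w)) :=
          (hv.mono fun w hw => (hball w hw).1).exp_mul_le_lintegral_ball hd
      _ ≤ ∫⁻ w in Metric.ball z d, ENNReal.ofReal B *
            ENNReal.ofReal (exp (v w) / (1 + w.re ^ 2)) := by
          refine setLIntegral_mono' measurableSet_ball fun w hw => ?_
          rw [← ENNReal.ofReal_mul hB.le]
          apply ENNReal.ofReal_le_ofReal
          rw [mul_div_assoc', le_div_iff₀ (by positivity), mul_comm]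
          have : w.re ^ 2 ≤ (|z.re| + 1) ^ 2 := by
            rw [← sq_abs w.re]
            gcongr
            exact (hball w hw).2
          gcongr
          linarith
      _ ≤ ∫⁻ w in S, ENNReal.ofReal B * ENNReal.ofReal (exp (v w) / (1 + w.re ^ 2)) :=
          lintegral_mono_set fun w hw => (hball w hw).1
      _ = ENNReal.ofReal (B * I) := by
          rw [lintegral_const_mul' _ _ ENNReal.ofReal_ne_top, ENNReal.ofReal_mul hB.le,
            ofReal_integral_eq_lintegral_ofReal hint
              (Filter.Eventually.of_forall fun w => by positivity)]
  have hd2 : d ^ 2 * exp (v z) ≤ (I + 1) * B := by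
    have : 1 * (d ^ 2 * exp (v z)) ≤ π * (d ^ 2 * exp (v z)) := by
      gcongr
      linarith [pi_gt_three]
    nlinarith
  have := log_le_log (by positivity) hd2
  rw [log_mul (by positivity) (by positivity), log_exp, log_pow] at this
  push_cast at this
  linarith

/-- Comparison with a nonnegative harmonic majorant on the rectangle `[-R, R] × [0, 1]`. -/
theorem HarmonicOnNhd.le_on_rectangle {v H : ℂ → ℝ} {R : ℝ}
    (hv : HarmonicOnNhd v {z : ℂ | 0 < z.im ∧ z.im < 1})
    (hcont : ContinuousOn v {z : ℂ | 0 ≤ z.im ∧ z.im ≤ 1})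
    (hbd : ∀ z : ℂ, z.im = 0 ∨ z.im = 1 → v z ≤ 0)
    (hH : HarmonicOnNhd H {z : ℂ | 0 ≤ z.im ∧ z.im ≤ 1})
    (hH0 : ∀ z : ℂ, |z.re| ≤ R → 0 ≤ z.im → z.im ≤ 1 → 0 ≤ H z)
    (hcap : ∀ z : ℂ, |z.re| = R → 0 < z.im → z.im < 1 → v z ≤ H z) {z : ℂ}
    (hzR : |z.re| ≤ R) (hz0 : 0 ≤ z.im) (hz1 : z.im ≤ 1) : v z ≤ H z := by
  have hsub : ∀ w ∈ Set.Icc (-R) R ×ℂ Set.Icc 0 1, w ∈ {z : ℂ | 0 ≤ z.im ∧ z.im ≤ 1} :=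
    fun w hw => hw.2
  have key := HarmonicAt.nonpos_of_nonpos_diff (f := v - H)
    (K := Set.Icc (-R) R ×ℂ Set.Icc 0 1) (U := Set.Ioo (-R) R ×ℂ Set.Ioo 0 1)
    (isCompact_Icc.reProdIm isCompact_Icc) (isOpen_Ioo.reProdIm isOpen_Ioo)
    (fun w hw => ⟨Set.Ioo_subset_Icc_self hw.1, Set.Ioo_subset_Icc_self hw.2⟩)
    ((hcont.mono hsub).sub (hH.continuousOn.mono hsub))
    (fun w hw => (hv w hw.2).sub (hH w (Set.Ioo_subset_Icc_self hw.2)))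
    (fun w ⟨⟨hwr, hwi⟩, hwU⟩ => ?_) z ⟨abs_le.1 hzR, hz0, hz1⟩
  · simpa using key
  · have hwR : |w.re| ≤ R := abs_le.2 hwr
    have hnn := hH0 w hwR hwi.1 hwi.2
    simp only [Pi.sub_apply, sub_nonpos]
    by_cases hb : w.im = 0 ∨ w.im = 1
    · exact (hbd w hb).trans hnn
    · push Not at hb
      have h0 := lt_of_le_of_ne hwi.1 hb.1.symm
      have h1 := lt_of_le_of_ne hwi.2 hb.2
      refine hcap w (le_antisymm hwR (not_lt.1 fun h => hwU ⟨abs_lt.1 h, h0, h1⟩)) h0 h1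

/-- The function `cosh (a x) cos (a (y - 1 / 2))` of `x + i y` is harmonic. -/
theorem harmonicAt_cosh_mul_cos (a : ℝ) (z : ℂ) :
    HarmonicAt (fun w : ℂ => Real.cosh (a * w.re) * Real.cos (a * (w.im - 1 / 2))) z := by
  have h : AnalyticAt ℂ (fun w : ℂ => Complex.cosh (a * (w - Complex.I / 2))) z := by
    apply Differentiable.analyticAt
    fun_prop
  convert h.harmonicAt_re using 2 with w
  have e : (a : ℂ) * (w - Complex.I / 2) =
      ((a * w.re : ℝ) : ℂ) + ((a * (w.im - 1 / 2) : ℝ) : ℂ) * Complex.I := by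
    conv_lhs => rw [← Complex.re_add_im w]
    push_cast
    ring
  rw [e, Complex.cosh_add, Complex.cosh_mul_I, Complex.sinh_mul_I]
  simp only [← Complex.ofReal_cosh, ← Complex.ofReal_sinh, ← Complex.ofReal_cos,
    ← Complex.ofReal_sin, Complex.add_re, Complex.ofReal_re,
    Complex.mul_re, Complex.mul_im, Complex.ofReal_im, Complex.I_re,
    Complex.I_im]
  simp

/-- A function which is continuous on the closed strip and nonpositive on its boundary is at most
`1` on the part of a vertical segment which is near the boundary. -/
theorem exists_le_one_near_strip_boundary {v : ℂ → ℝ}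
    (hcont : ContinuousOn v {z : ℂ | 0 ≤ z.im ∧ z.im ≤ 1})
    (hbd : ∀ z : ℂ, z.im = 0 ∨ z.im = 1 → v z ≤ 0) (x : ℝ) :
    ∃ η > 0, ∀ z : ℂ, z.re = x → 0 ≤ z.im → z.im ≤ 1 → (z.im < η ∨ 1 - z.im < η) → v z ≤ 1 := by
  have key : ∀ b : ℝ, b = 0 ∨ b = 1 → ∃ η > 0, ∀ z : ℂ, z.re = x → 0 ≤ z.im → z.im ≤ 1 →
      |z.im - b| < η → v z ≤ 1 := by
    intro b hb
    have hc := hcont ⟨x, b⟩ (by rcases hb with rfl | rfl <;> simp)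
    obtain ⟨η, hη, h⟩ := Metric.continuousWithinAt_iff.1 hc 1 one_pos
    refine ⟨η, hη, fun z hx h0 h1 hz => ?_⟩
    have hdist : dist z ⟨x, b⟩ = |z.im - b| := by
      rw [Complex.dist_of_re_eq (by simpa using hx), Real.dist_eq]
    have := (abs_lt.1 (h ⟨h0, h1⟩ (hdist ▸ hz))).2
    linarith [hbd ⟨x, b⟩ hb]
  obtain ⟨η₀, hη₀, h₀⟩ := key 0 (Or.inl rfl)
  obtain ⟨η₁, hη₁, h₁⟩ := key 1 (Or.inr rfl)
  refine ⟨min η₀ η₁, lt_min hη₀ hη₁, fun z hx h0 h1 hz => ?_⟩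
  rcases hz with hz | hz
  · exact h₀ z hx h0 h1 (by simpa [abs_of_nonneg h0] using hz.trans_le (min_le_left _ _))
  · refine h₁ z hx h0 h1 ?_
    rw [abs_sub_comm, abs_of_nonneg (by linarith)]
    exact hz.trans_le (min_le_right _ _)

/-- The harmonic function `2 log (4 R / |w - c|)` with a logarithmic pole at `c`. -/
noncomputable def logPole (R : ℝ) (c w : ℂ) : ℝ := 2 * (log (4 * R) - log ‖w - c‖)

theorem harmonicAt_logPole (R : ℝ) {c w : ℂ} (h : w ≠ c) : HarmonicAt (logPole R c) w := by
  have h1 : HarmonicAt (fun w => log ‖w - c‖) w :=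
    AnalyticAt.harmonicAt_log_norm (f := fun w => w - c) (by fun_prop) (sub_ne_zero.2 h)
  exact ((harmonicAt_const (log (4 * R))).sub h1).const_smul (c := (2 : ℝ))

theorem logPole_nonneg {R : ℝ} {c w : ℂ} (h : w ≠ c) (hle : ‖w - c‖ ≤ 4 * R) :
    0 ≤ logPole R c w := by
  have := log_le_log (norm_pos_iff.2 (sub_ne_zero.2 h)) hle
  unfold logPole
  linarith

theorem neg_two_mul_log_le_logPole {R t : ℝ} {c w : ℂ} (h : w ≠ c) (hR : 1 ≤ R) (ht : 0 < t)
    (hle : ‖w - c‖ ≤ 2 * t) : -2 * log t ≤ logPole R c w := by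
  have h1 := log_le_log (norm_pos_iff.2 (sub_ne_zero.2 h)) hle
  have h2 := log_le_log two_pos (by linarith : 2 ≤ 4 * R)
  rw [log_mul two_ne_zero ht.ne'] at h1
  unfold logPole
  linarith

theorem logPole_le {R : ℝ} {c w : ℂ} (hR : 0 < R) (hle : R / 2 ≤ ‖w - c‖) :
    logPole R c w ≤ 2 * log 8 := by
  have h1 := log_le_log (by positivity) hle
  have h2 : log (4 * R) = log 8 + log (R / 2) := by
    rw [← log_mul (by norm_num) (by positivity)]
    ring_nf
  unfold logPole
  linarith

theorem one_add_sq_div_two_le_cosh (x : ℝ) : 1 + x ^ 2 / 2 ≤ cosh x := by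
  have h := cosh_two_mul (x / 2)
  rw [cosh_sq, mul_div_cancel₀ x two_ne_zero] at h
  have : (x / 2) ^ 2 ≤ sinh (x / 2) ^ 2 := by
    rw [sq_le_sq, abs_sinh]
    exact self_le_sinh_iff.2 (abs_nonneg _)
  linarith

theorem exists_log_le_half_cosh (M B : ℝ) (hM : 0 < M) :
    ∃ R ≥ B, 1 ≤ R ∧ 1 ≤ cosh R / 2 ∧ log (M * (1 + (R + 1) ^ 2)) ≤ cosh R / 2 := by
  refine ⟨|B| + |log M| + 20, by linarith [le_abs_self B, abs_nonneg (log M)], 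
    by linarith [abs_nonneg B, abs_nonneg (log M)], ?_⟩
  set R := |B| + |log M| + 20 with hRdef
  have hR : 20 ≤ R := by linarith [abs_nonneg B, abs_nonneg (log M)]
  have hMR : log M ≤ R := by linarith [abs_nonneg B, le_abs_self (log M)]
  have hcosh := one_add_sq_div_two_le_cosh R
  have h1 : log (1 + (R + 1) ^ 2) ≤ 2 * (R + 1) := by
    calc log (1 + (R + 1) ^ 2) ≤ log ((R + 2) ^ 2) := log_le_log (by positivity) (by nlinarith)
      _ = 2 * log (R + 2) := by rw [log_pow]; norm_num
      _ ≤ 2 * (R + 1) := by linarith [log_le_sub_one_of_pos (by linarith : 0 < R + 2)]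
  rw [log_mul hM.ne' (by positivity)]
  constructor <;> nlinarith

/-- A harmonic function on the strip with nonpositive boundary values and integrable exponential
has growth at most `cosh (Re z)`. -/
theorem HarmonicOnNhd.le_cosh_of_integrableOn_strip {v : ℂ → ℝ}
    (hv : HarmonicOnNhd v {z : ℂ | 0 < z.im ∧ z.im < 1})
    (hcont : ContinuousOn v {z : ℂ | 0 ≤ z.im ∧ z.im ≤ 1})
    (hbd : ∀ z : ℂ, z.im = 0 ∨ z.im = 1 → v z ≤ 0)
    (hint : IntegrableOn (fun z : ℂ => exp (v z) / (1 + z.re ^ 2)) {z : ℂ | 0 < z.im ∧ z.im < 1})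
    {z : ℂ} (hz0 : 0 ≤ z.im) (hz1 : z.im ≤ 1) : v z ≤ cosh z.re + 8 * log 8 := by
  obtain ⟨M, hM, hlog⟩ := hv.le_log_of_integrableOn_strip hint
  obtain ⟨R, hRz, hR1, hcosh1, hcoshM⟩ := exists_log_le_half_cosh M (2 * |z.re|) hM
  obtain ⟨η₁, hη₁, hnear₁⟩ := exists_le_one_near_strip_boundary hcont hbd R
  obtain ⟨η₂, hη₂, hnear₂⟩ := exists_le_one_near_strip_boundary hcont hbd (-R)
  obtain ⟨δ, hδ, hδ₁, hδ₂, hδ1⟩ : ∃ δ > 0, δ ≤ η₁ ∧ δ ≤ η₂ ∧ δ ≤ 1 :=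
    ⟨min (min η₁ η₂) 1, by positivity, (min_le_left _ _).trans (min_le_left _ _),
      (min_le_left _ _).trans (min_le_right _ _), min_le_right _ _⟩
  set C : ℂ → ℝ := fun w => cosh (1 * w.re) * cos (1 * (w.im - 1 / 2)) with hC
  set H : ℂ → ℝ := C + (logPole R ⟨R, -δ⟩ + logPole R ⟨R, 1 + δ⟩) +
    (logPole R ⟨-R, -δ⟩ + logPole R ⟨-R, 1 + δ⟩) with hHdef
  have hne : ∀ w : ℂ, 0 ≤ w.im → w.im ≤ 1 → ∀ s : ℝ, w ≠ ⟨s, -δ⟩ ∧ w ≠ ⟨s, 1 + δ⟩ := by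
    intro w h0 h1 s
    constructor <;>
    · intro h
      have := congrArg Complex.im h
      simp only at this
      linarith
  have hcos : ∀ w : ℂ, 0 ≤ w.im → w.im ≤ 1 → cosh w.re / 2 ≤ C w := by
    intro w h0 h1
    have := one_sub_sq_div_two_le_cos (x := w.im - 1 / 2)
    have h2 : 1 / 2 ≤ cos (w.im - 1 / 2) := by nlinarith
    simp only [hC, one_mul]
    nlinarith [cosh_pos w.re]
  have hle : ∀ w : ℂ, |w.re| ≤ R → 0 ≤ w.im → w.im ≤ 1 → ∀ s : ℝ, |s| = R →
      ‖w - ⟨s, -δ⟩‖ ≤ 4 * R ∧ ‖w - ⟨s, 1 + δ⟩‖ ≤ 4 * R := by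
    intro w hw h0 h1 s hs
    have hre : |w.re - s| ≤ 2 * R := (abs_sub _ _).trans (by linarith)
    constructor <;>
    · refine (Complex.norm_le_abs_re_add_abs_im _).trans ?_
      have him : |w.im - -δ| ≤ 2 ∧ |w.im - (1 + δ)| ≤ 2 :=
        ⟨abs_le.2 ⟨by linarith, by linarith⟩, abs_le.2 ⟨by linarith, by linarith⟩⟩
      simp only [Complex.sub_re, Complex.sub_im]
      linarith [him.1, him.2]
  have hpole : ∀ w : ℂ, |w.re| ≤ R → 0 ≤ w.im → w.im ≤ 1 → ∀ s : ℝ, |s| = R →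
      0 ≤ logPole R ⟨s, -δ⟩ w + logPole R ⟨s, 1 + δ⟩ w := fun w hw h0 h1 s hs =>
    add_nonneg (logPole_nonneg (hne w h0 h1 s).1 (hle w hw h0 h1 s hs).1)
      (logPole_nonneg (hne w h0 h1 s).2 (hle w hw h0 h1 s hs).2)
  have hcapPole : ∀ w : ℂ, δ ≤ w.im → δ ≤ 1 - w.im →
      - 2 * log w.im - 2 * log (1 - w.im) ≤
        logPole R ⟨w.re, -δ⟩ w + logPole R ⟨w.re, 1 + δ⟩ w := by
    intro w h0 h1
    have hn := hne w (by linarith) (by linarith) w.re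
    have e1 : ‖w - ⟨w.re, -δ⟩‖ ≤ 2 * w.im := by
      refine (Complex.norm_le_abs_re_add_abs_im _).trans ?_
      simp only [Complex.sub_re, Complex.sub_im, sub_self, abs_zero, zero_add]
      exact abs_le.2 ⟨by linarith, by linarith⟩
    have e2 : ‖w - ⟨w.re, 1 + δ⟩‖ ≤ 2 * (1 - w.im) := by
      refine (Complex.norm_le_abs_re_add_abs_im _).trans ?_
      simp only [Complex.sub_re, Complex.sub_im, sub_self, abs_zero, zero_add]
      exact abs_le.2 ⟨by linarith, by linarith⟩
    linarith [neg_two_mul_log_le_logPole hn.1 hR1 (hδ.trans_le h0) e1,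
      neg_two_mul_log_le_logPole hn.2 hR1 (hδ.trans_le h1) e2]
  have hfar : ∀ s : ℝ, |s| = R → ∀ t : ℝ, logPole R ⟨s, t⟩ z ≤ 2 * log 8 := by
    intro s hs t
    refine logPole_le (by linarith) (le_trans ?_ (Complex.abs_re_le_norm _))
    have := abs_sub_abs_le_abs_sub s z.re
    rw [abs_sub_comm] at this
    simp only [Complex.sub_re]
    linarith
  have habsR : |R| = R := abs_of_nonneg (by linarith)
  have habsR' : |-R| = R := by rw [abs_neg, habsR]
  have hHz : v z ≤ H z := by
    refine hv.le_on_rectangle hcont hbd ?_ ?_ ?_ (R := R) (by linarith [abs_nonneg z.re]) hz0 hz1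
    · intro w ⟨h0, h1⟩
      exact ((harmonicAt_cosh_mul_cos 1 w).add ((harmonicAt_logPole R (hne w h0 h1 _).1).add
        (harmonicAt_logPole R (hne w h0 h1 _).2))).add
        ((harmonicAt_logPole R (hne w h0 h1 _).1).add (harmonicAt_logPole R (hne w h0 h1 _).2))
    · intro w hw h0 h1
      simp only [hHdef, Pi.add_apply]
      linarith [hpole w hw h0 h1 R habsR, hpole w hw h0 h1 (-R) habsR', hcos w h0 h1,
        cosh_pos w.re]
    · intro w hw h0 h1
      have hp := hpole w hw.le h0.le h1.le R habsR
      have hp' := hpole w hw.le h0.le h1.le (-R) habsR'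
      have hc := hcos w h0.le h1.le
      rw [← cosh_abs, hw] at hc
      simp only [hHdef, Pi.add_apply]
      by_cases hnear : w.im < δ ∨ 1 - w.im < δ
      · have : v w ≤ 1 := by
          rcases (abs_eq (by linarith)).1 hw with h | h
          · exact hnear₁ w h h0.le h1.le
              (hnear.imp (fun h => h.trans_le hδ₁) fun h => h.trans_le hδ₁)
          · exact hnear₂ w h h0.le h1.le
              (hnear.imp (fun h => h.trans_le hδ₂) fun h => h.trans_le hδ₂)
        linarith
      · push Not at hnear
        have hb := hlog w h0 h1
        have hcp := hcapPole w hnear.1 hnear.2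
        rw [hw] at hb
        rcases (abs_eq (by linarith)).1 hw with h | h <;> rw [h] at hcp <;> linarith
  have hCz : C z ≤ cosh z.re := by
    simp only [hC, one_mul]
    exact mul_le_of_le_one_right (cosh_pos _).le (cos_le_one _)
  simp only [hHdef, Pi.add_apply] at hHz
  linarith [hfar R habsR (-δ), hfar R habsR (1 + δ), hfar (-R) habsR' (-δ),
    hfar (-R) habsR' (1 + δ)]

/-- A Phragmén-Lindelöf principle for harmonic functions on the strip. -/
theorem HarmonicOnNhd.nonpos_of_le_cosh_add {v : ℂ → ℝ} {K : ℝ} (hK : 0 ≤ K)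
    (hv : HarmonicOnNhd v {z : ℂ | 0 < z.im ∧ z.im < 1})
    (hcont : ContinuousOn v {z : ℂ | 0 ≤ z.im ∧ z.im ≤ 1})
    (hbd : ∀ z : ℂ, z.im = 0 ∨ z.im = 1 → v z ≤ 0)
    (hgrowth : ∀ z : ℂ, 0 ≤ z.im → z.im ≤ 1 → v z ≤ cosh z.re + K)
    {z : ℂ} (hz0 : 0 ≤ z.im) (hz1 : z.im ≤ 1) : v z ≤ 0 := by
  set C : ℂ → ℝ := fun w => cosh (2 * w.re) * cos (2 * (w.im - 1 / 2)) with hC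
  have hcos : ∀ w : ℂ, 0 ≤ w.im → w.im ≤ 1 → cosh (2 * w.re) / 2 ≤ C w := by
    intro w h0 h1
    have := one_sub_sq_div_two_le_cos (x := 2 * (w.im - 1 / 2))
    have h2 : 1 / 2 ≤ cos (2 * (w.im - 1 / 2)) := by nlinarith
    simp only [hC]
    nlinarith [cosh_pos (2 * w.re)]
  have key : ∀ ε > 0, v z ≤ ε * C z := by
    intro ε hε
    set R := max |z.re| (2 / ε * (1 + K)) with hRdef
    have hR : 2 / ε * (1 + K) ≤ R := le_max_right _ _
    have hcap : cosh R + K ≤ ε * (cosh (2 * R) / 2) := by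
      have h1 := one_le_cosh R
      have h2 : R ≤ cosh R := by nlinarith [one_add_sq_div_two_le_cosh R, sq_nonneg (R - 1)]
      have h3 : 1 + K ≤ ε / 2 * cosh R := by
        calc 1 + K = ε / 2 * (2 / ε * (1 + K)) := by field_simp
          _ ≤ ε / 2 * cosh R := by gcongr; exact hR.trans h2
      have h4 : cosh R ^ 2 ≤ cosh (2 * R) := by
        rw [cosh_two_mul]
        nlinarith [sq_nonneg (sinh R)]
      calc cosh R + K ≤ cosh R * (1 + K) := by nlinarith
        _ ≤ cosh R * (ε / 2 * cosh R) := by gcongr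
        _ = ε * (cosh R ^ 2 / 2) := by ring
        _ ≤ ε * (cosh (2 * R) / 2) := by gcongr
    refine hv.le_on_rectangle (H := ε • C) (R := R) hcont hbd ?_ ?_ ?_ (le_max_left _ _) hz0 hz1
    · exact fun w _ => (harmonicAt_cosh_mul_cos 2 w).const_smul
    · intro w _ h0 h1
      exact mul_nonneg hε.le (le_trans (by positivity) (hcos w h0 h1))
    · intro w hw h0 h1
      have hg := hgrowth w h0.le h1.le
      have hc := hcos w h0.le h1.le
      have e : cosh (2 * w.re) = cosh (2 * R) := by
        rw [← cosh_abs, abs_mul, hw, abs_two]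
      rw [← cosh_abs, hw] at hg
      rw [e] at hc
      exact hg.trans (hcap.trans (mul_le_mul_of_nonneg_left hc hε.le))
  have hCz : 0 < C z := lt_of_lt_of_le (by positivity) (hcos z hz0 hz1)
  by_contra! hpos
  have := key (v z / (2 * C z)) (by positivity)
  rw [div_mul_eq_mul_div, le_div_iff₀ (by positivity)] at this
  nlinarith

end InnerProductSpace

/-- Uniqueness on the strip: a nonpositive function, continuous on the closed strip
`0 ≤ Im z ≤ 1`, harmonic in the open strip, vanishing on the two boundary lines,
and satisfying the weighted integrability `∫_S e^{−u(z)}/(1 + (Re z)²) < ∞`, must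
vanish identically on the closed strip. -/
theorem stmt_10 (u : ℂ → ℝ)
    (S : Set ℂ) (hS : S = {z : ℂ | 0 < z.im ∧ z.im < 1})
    (hcont : ContinuousOn u (closure S))
    (hsmooth : ContDiffOn ℝ 2 u S)
    (hharm : ∀ z ∈ S,
      fderiv ℝ (fun w => fderiv ℝ u w 1) z 1
        + fderiv ℝ (fun w => fderiv ℝ u w Complex.I) z Complex.I = 0)
    (hnonpos : ∀ z ∈ closure S, u z ≤ 0)
    (hbdry : ∀ z : ℂ, z.im = 0 ∨ z.im = 1 → u z = 0)
    (hint : IntegrableOn (fun z : ℂ => Real.exp (-u z) / (1 + z.re ^ 2)) S) :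
    ∀ z ∈ closure S, u z = 0 := by
  have hcl : closure S = {z : ℂ | 0 ≤ z.im ∧ z.im ≤ 1} := by
    have h : S = Set.univ ×ℂ Set.Ioo 0 1 := by
      ext z
      simp [hS, Complex.mem_reProdIm]
    rw [h, Complex.closure_reProdIm, closure_univ, closure_Ioo zero_ne_one]
    ext z
    simp [Complex.mem_reProdIm]
  have hopen : IsOpen S := by
    rw [hS]
    exact (isOpen_lt continuous_const Complex.continuous_im).inter
      (isOpen_lt Complex.continuous_im continuous_const)
  have hharm' : InnerProductSpace.HarmonicOnNhd (-u) S := fun z hz =>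
    (InnerProductSpace.harmonicAt_of_fderiv_fderiv hopen hsmooth hharm hz).neg
  have hbdry' : ∀ z : ℂ, z.im = 0 ∨ z.im = 1 → (-u) z ≤ 0 := fun z hz => by simp [hbdry z hz]
  have hcont' := hcont.neg
  rw [hcl] at hcont'
  rw [hS] at hharm' hint
  intro z hz
  refine le_antisymm (hnonpos z hz) ?_
  rw [hcl] at hz
  have := hharm'.nonpos_of_le_cosh_add (K := 8 * Real.log 8)
    (by have := Real.log_nonneg (by norm_num : (1 : ℝ) ≤ 8); positivity) hcont' hbdry'
    (fun w h0 h1 => hharm'.le_cosh_of_integrableOn_strip hcont' hbdry' hint h0 h1) hz.1 hz.2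
  simpa using this
end

section
/- For every M ≥ 0 and every r ∈ (0,1) there exists K ≥ 0 such that: if h : ℂ → ℝ is twice continuously differentiable on the open unit disk with h(z) ≤ M and |Δh(z)| ≤ M for all |z| < 1, and h(0) ≥ −M, then h(z) ≥ −K for all |z| ≤ r. -/
open MeasureTheory Set Metric Filter Topology

/-- Differentiation under the integral sign over a compact interval, for an integrand that is
jointly continuous together with its derivative in the parameter. -/
theorem hasDerivAt_intervalIntegral_of_continuousOn {F F' : ℝ → ℝ → ℝ} {S : Set ℝ} {a b x₀ : ℝ}
    (hS : IsOpen S) (hx₀ : x₀ ∈ S)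
    (hF : ContinuousOn (fun p : ℝ × ℝ => F p.1 p.2) (S ×ˢ univ))
    (hF' : ContinuousOn (fun p : ℝ × ℝ => F' p.1 p.2) (S ×ˢ univ))
    (hderiv : ∀ x ∈ S, ∀ t, HasDerivAt (fun y => F y t) (F' x t) x) :
    HasDerivAt (fun x => ∫ t in a..b, F x t) (∫ t in a..b, F' x₀ t) x₀ := by
  have slice : ∀ {G : ℝ → ℝ → ℝ}, ContinuousOn (fun p : ℝ × ℝ => G p.1 p.2) (S ×ˢ univ) →
      ∀ x ∈ S, Continuous (G x) := fun hG x hx =>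
    continuousOn_univ.mp (hG.comp (f := fun t => (x, t)) (by fun_prop) fun t _ => ⟨hx, mem_univ t⟩)
  obtain ⟨ε, hε, hεS⟩ := nhds_basis_closedBall.mem_iff.mp (hS.mem_nhds hx₀)
  obtain ⟨B, hB⟩ := ((isCompact_closedBall x₀ ε).prod isCompact_uIcc).exists_bound_of_continuousOn
    (hF'.mono (prod_mono hεS (subset_univ (uIcc a b))))
  refine (intervalIntegral.hasDerivAt_integral_of_dominated_loc_of_deriv_le (bound := fun _ => B)
    (closedBall_mem_nhds x₀ hε) ?_ ((slice hF x₀ hx₀).intervalIntegrable _ _)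
    (slice hF' x₀ hx₀).aestronglyMeasurable ?_ intervalIntegrable_const ?_).2
  · filter_upwards [hS.mem_nhds hx₀] with x hx using (slice hF x hx).aestronglyMeasurable
  · exact .of_forall fun t ht x hx => hB (x, t) ⟨hx, uIoc_subset_uIcc ht⟩
  · exact .of_forall fun t _ x hx => hderiv x (hεS hx) t

/-- The trace of a real bilinear form on `ℂ` can be computed in any rotated orthonormal basis. -/
theorem trace_rotate (B : ℂ →L[ℝ] ℂ →L[ℝ] ℝ) (e : ℂ) (he : ‖e‖ = 1) :
    B e e + B (Complex.I * e) (Complex.I * e) = B 1 1 + B Complex.I Complex.I := by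
  have h1 : e = e.re • (1 : ℂ) + e.im • Complex.I := by
    apply Complex.ext <;> simp
  have h2 : Complex.I * e = (-e.im) • (1 : ℂ) + e.re • Complex.I := by
    apply Complex.ext <;> simp
  have h3 : e.re * e.re + e.im * e.im = 1 := by
    rw [← Complex.normSq_apply, Complex.normSq_eq_norm_sq, he, one_pow]
  rw [h2]
  nth_rw 1 2 [h1]
  simp only [map_add, map_smul, add_apply, smul_apply,
    smul_eq_mul]
  linear_combination (B 1 1 + B Complex.I Complex.I) * h3

set_option maxHeartbeats 1000000 in
/-- Mean value inequality: if `Δu ≤ M` on a disk, the average of `u` over a circle of radius `s`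
exceeds the value at the center by at most `M s² / 4`. -/
theorem integral_circleMap_le {u : ℂ → ℝ} {c : ℂ} {R M : ℝ}
    (hu : ContDiffOn ℝ 2 u (ball c R))
    (hΔ : ∀ z ∈ ball c R, fderiv ℝ (fderiv ℝ u) z 1 1
      + fderiv ℝ (fderiv ℝ u) z Complex.I Complex.I ≤ M) {s : ℝ} (hs : s ∈ Ico 0 R) :
    ∫ θ in -Real.pi..Real.pi, u (circleMap c s θ) ≤
      2 * Real.pi * u c + Real.pi * M * s ^ 2 / 2 := by
  have hπ := Real.pi_pos
  set e : ℝ → ℂ := circleMap 0 1 with he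
  have he_norm : ∀ θ, ‖e θ‖ = 1 := fun θ => by simp [he]
  have he_cont : Continuous e := continuous_circleMap 0 1
  have hcm : ∀ s θ, circleMap c s θ = c + s • e θ := fun s θ => by simp [circleMap, he]
  set S : Set ℝ := Ioo (-R) R with hS
  have hmem : ∀ s ∈ S, ∀ θ, circleMap c s θ ∈ ball c R := fun s hs θ => by
    simpa [hcm, he_norm, norm_smul] using abs_lt.mpr hs
  have hD : ContDiffOn ℝ 1 (fderiv ℝ u) (ball c R) :=
    hu.fderiv_of_isOpen isOpen_ball (by norm_num)
  have hD2 : ContinuousOn (fderiv ℝ (fderiv ℝ u)) (ball c R) :=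
    hD.continuousOn_fderiv_of_isOpen isOpen_ball le_rfl
  have hu' : ∀ z ∈ ball c R, HasFDerivAt u (fderiv ℝ u z) z := fun z hz =>
    ((hu.differentiableOn (by norm_num)).differentiableAt (isOpen_ball.mem_nhds hz)).hasFDerivAt
  have hDu' : ∀ z ∈ ball c R, HasFDerivAt (fderiv ℝ u) (fderiv ℝ (fderiv ℝ u) z) z := fun z hz =>
    ((hD.differentiableOn (by norm_num)).differentiableAt (isOpen_ball.mem_nhds hz)).hasFDerivAt
  have hcm_cont : Continuous fun p : ℝ × ℝ => circleMap c p.1 p.2 := by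
    simp only [hcm]; fun_prop
  have hmaps : MapsTo (fun p : ℝ × ℝ => circleMap c p.1 p.2) (S ×ˢ univ) (ball c R) :=
    fun p hp => hmem p.1 hp.1 p.2
  have hline : ∀ s θ, HasDerivAt (fun s => circleMap c s θ) (e θ) s := fun s θ => by
    simpa [hcm] using ((hasDerivAt_id s).smul_const (e θ)).const_add c
  have he_deriv : ∀ θ, HasDerivAt e (Complex.I * e θ) θ := fun θ => by
    simpa [he, mul_comm] using hasDerivAt_circleMap 0 1 θ
  have hU : ContinuousOn (fun p : ℝ × ℝ => u (circleMap c p.1 p.2)) (S ×ˢ univ) :=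
    hu.continuousOn.comp hcm_cont.continuousOn hmaps
  have hU1 : ContinuousOn (fun p : ℝ × ℝ => fderiv ℝ u (circleMap c p.1 p.2) (e p.2))
      (S ×ˢ univ) :=
    (hD.continuousOn.comp hcm_cont.continuousOn hmaps).clm_apply (by fun_prop)
  have hD2c := hD2.comp hcm_cont.continuousOn hmaps
  have hU2 : ContinuousOn (fun p : ℝ × ℝ =>
      fderiv ℝ (fderiv ℝ u) (circleMap c p.1 p.2) (e p.2) (e p.2)) (S ×ˢ univ) :=
    (hD2c.clm_apply (by fun_prop)).clm_apply (by fun_prop)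
  have hU3 : ContinuousOn (fun p : ℝ × ℝ => fderiv ℝ (fderiv ℝ u) (circleMap c p.1 p.2)
      (Complex.I * e p.2) (Complex.I * e p.2)) (S ×ˢ univ) :=
    (hD2c.clm_apply (by fun_prop)).clm_apply (by fun_prop)
  have slice : ∀ {G : ℝ × ℝ → ℝ}, ContinuousOn G (S ×ˢ univ) →
      ∀ s ∈ S, Continuous fun θ => G (s, θ) := fun hG s hs =>
    continuousOn_univ.mp (hG.comp (f := fun t => (s, t)) (by fun_prop) fun t _ => ⟨hs, mem_univ t⟩)
  set φ : ℝ → ℝ := fun s => ∫ θ in -Real.pi..Real.pi, u (circleMap c s θ) with hφ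
  set ψ : ℝ → ℝ := fun s => ∫ θ in -Real.pi..Real.pi, fderiv ℝ u (circleMap c s θ) (e θ) with hψ
  have hφ' : ∀ s ∈ S, HasDerivAt φ (ψ s) s := fun s hs =>
    hasDerivAt_intervalIntegral_of_continuousOn (F := fun s θ => u (circleMap c s θ))
      (F' := fun s θ => fderiv ℝ u (circleMap c s θ) (e θ)) isOpen_Ioo hs hU hU1 fun x hx θ =>
      (hu' _ (hmem x hx θ)).comp_hasDerivAt x (hline x θ)
  have hψ' : ∀ s ∈ S, HasDerivAt ψ (∫ θ in -Real.pi..Real.pi,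
      fderiv ℝ (fderiv ℝ u) (circleMap c s θ) (e θ) (e θ)) s := fun s hs =>
    hasDerivAt_intervalIntegral_of_continuousOn
      (F := fun s θ => fderiv ℝ u (circleMap c s θ) (e θ))
      (F' := fun s θ => fderiv ℝ (fderiv ℝ u) (circleMap c s θ) (e θ) (e θ))
      isOpen_Ioo hs hU1 hU2 fun x hx θ => by
      simpa using ((hDu' _ (hmem x hx θ)).comp_hasDerivAt x (hline x θ)).clm_apply
        (hasDerivAt_const x (e θ))
  -- the angular second derivative integrates to zero over a full period
  have hangular : ∀ s ∈ S, s * (∫ θ in -Real.pi..Real.pi, fderiv ℝ (fderiv ℝ u)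
      (circleMap c s θ) (Complex.I * e θ) (Complex.I * e θ)) = ψ s := fun s hs => by
    have key : ∀ θ, HasDerivAt (fun θ => fderiv ℝ u (circleMap c s θ) (Complex.I * e θ))
        (s * fderiv ℝ (fderiv ℝ u) (circleMap c s θ) (Complex.I * e θ) (Complex.I * e θ)
          - fderiv ℝ u (circleMap c s θ) (e θ)) θ := fun θ => by
      have h1 : HasDerivAt (circleMap c s) (s • (Complex.I * e θ)) θ := by
        simpa [funext (hcm s)] using ((he_deriv θ).const_smul s).const_add c
      have h2 : HasDerivAt (fun θ => Complex.I * e θ) (-e θ) θ := by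
        simpa [← mul_assoc] using (he_deriv θ).const_mul Complex.I
      simpa [sub_eq_add_neg, -Complex.real_smul] using
        ((hDu' _ (hmem s hs θ)).comp_hasDerivAt θ h1).clm_apply h2
    have hc3 := (slice hU3 s hs).const_mul s
    have hc1 := slice hU1 s hs
    have := intervalIntegral.integral_eq_sub_of_hasDerivAt (a := -Real.pi) (b := Real.pi)
      (fun θ _ => key θ) ((hc3.sub hc1).intervalIntegrable _ _)
    rw [intervalIntegral.integral_sub (hc3.intervalIntegrable _ _) (hc1.intervalIntegrable _ _),
      intervalIntegral.integral_const_mul] at this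
    have hper : e (-Real.pi) = e Real.pi := by
      have := periodic_circleMap 0 1 (-Real.pi)
      rw [he, ← this]; congr 1; ring
    rw [hcm, hcm, hper, sub_self, sub_eq_zero] at this
    exact this
  have hsub : Ico 0 R ⊆ S := fun x hx => ⟨by linarith [hx.1, hx.2], hx.2⟩
  have hflux : AntitoneOn (fun s => s * ψ s - Real.pi * M * s ^ 2) (Ico 0 R) := by
    have hder : ∀ s ∈ S, HasDerivAt (fun s => s * ψ s - Real.pi * M * s ^ 2)
        (ψ s + s * (∫ θ in -Real.pi..Real.pi, fderiv ℝ (fderiv ℝ u) (circleMap c s θ)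
          (e θ) (e θ)) - Real.pi * M * (2 * s)) s := fun s hs => by
      refine (((hasDerivAt_id' s).fun_mul (hψ' s hs)).fun_sub
        ((hasDerivAt_pow 2 s).const_mul (Real.pi * M))).congr_deriv ?_
      norm_num
    refine antitoneOn_of_hasDerivWithinAt_nonpos (convex_Ico 0 R)
      (fun s hs => (hder s (hsub hs)).continuousAt.continuousWithinAt)
      (fun s hs => (hder s (hsub (interior_subset hs))).hasDerivWithinAt) fun s hs => ?_
    have hs := interior_subset hs
    have hsS := hsub hs
    have hle : (∫ θ in -Real.pi..Real.pi,
        (fderiv ℝ (fderiv ℝ u) (circleMap c s θ) (e θ) (e θ)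
        + fderiv ℝ (fderiv ℝ u) (circleMap c s θ) (Complex.I * e θ) (Complex.I * e θ)))
        ≤ ∫ _ in -Real.pi..Real.pi, M := by
      refine intervalIntegral.integral_mono_on (by linarith)
        (((slice hU2 s hsS).add (slice hU3 s hsS)).intervalIntegrable _ _)
        intervalIntegrable_const fun θ _ => ?_
      rw [trace_rotate _ _ (he_norm θ)]
      exact hΔ _ (hmem s hsS θ)
    rw [intervalIntegral.integral_add ((slice hU2 s hsS).intervalIntegrable _ _)
      ((slice hU3 s hsS).intervalIntegrable _ _), intervalIntegral.integral_const,
      smul_eq_mul] at hle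
    rw [← hangular s hsS]
    linarith [mul_le_mul_of_nonneg_left hle hs.1]
  have hmean : AntitoneOn (fun s => φ s - Real.pi * M * s ^ 2 / 2) (Ico 0 R) := by
    have hder : ∀ s ∈ S, HasDerivAt (fun s => φ s - Real.pi * M * s ^ 2 / 2)
        (ψ s - Real.pi * M * s) s := fun s hs => by
      refine ((hφ' s hs).fun_sub
        (((hasDerivAt_pow 2 s).const_mul (Real.pi * M)).div_const 2)).congr_deriv ?_
      norm_num
      ring
    refine antitoneOn_of_hasDerivWithinAt_nonpos (convex_Ico 0 R)
      (fun s hs => (hder s (hsub hs)).continuousAt.continuousWithinAt)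
      (fun s hs => (hder s (hsub (interior_subset hs))).hasDerivWithinAt) fun s hs => ?_
    rw [interior_Ico] at hs
    have h := hflux ⟨le_rfl, hs.1.trans hs.2⟩ ⟨hs.1.le, hs.2⟩ hs.1.le
    simp only [zero_mul, ne_eq, OfNat.ofNat_ne_zero, not_false_eq_true, zero_pow, mul_zero,
      sub_zero] at h
    refine nonpos_of_mul_nonpos_right (a := s) ?_ hs.1
    linarith
  have h := hmean ⟨le_rfl, hs.1.trans_lt hs.2⟩ hs hs.1
  have h0 : φ 0 = 2 * Real.pi * u c := by
    simp only [hφ, circleMap_zero_radius, Function.const_apply, intervalIntegral.integral_const,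
      smul_eq_mul]
    ring
  simp only [h0] at h
  linarith

/-- In polar coordinates, a continuous function on a closed disk is integrable with its Jacobian. -/
theorem integrableOn_polar {f : ℂ → ℝ} {c : ℂ} {R : ℝ} (hf : ContinuousOn f (closedBall c R)) :
    IntegrableOn (fun p : ℝ × ℝ => p.1 * f (circleMap c p.1 p.2))
      (Ioc 0 R ×ˢ Ioo (-Real.pi) Real.pi) := by
  have hcm_cont : Continuous fun p : ℝ × ℝ => circleMap c p.1 p.2 := by
    unfold circleMap; fun_prop
  refine (ContinuousOn.integrableOn_compact (isCompact_Icc.prod isCompact_Icc)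
    (continuous_fst.continuousOn.mul (hf.comp hcm_cont.continuousOn fun p hp => ?_))).mono_set
    (prod_mono Ioc_subset_Icc_self Ioo_subset_Icc_self)
  simpa [circleMap, abs_of_nonneg hp.1.1] using hp.1.2

/-- Integration over a disk in polar coordinates. -/
theorem setIntegral_closedBall_eq_polar {f : ℂ → ℝ} {c : ℂ} {R : ℝ} (hR : 0 ≤ R)
    (hf : ContinuousOn f (closedBall c R)) :
    ∫ z in closedBall c R, f z =
      ∫ s in 0..R, s * ∫ θ in -Real.pi..Real.pi, f (circleMap c s θ) := by
  have hint := integrableOn_polar hf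
  calc ∫ z in closedBall c R, f z
      = ∫ z, (closedBall c R).indicator f (c + z) := by
        rw [← integral_indicator measurableSet_closedBall, integral_add_left_eq_self]
    _ = ∫ p in polarCoord.target, (Ioc 0 R ×ˢ Ioo (-Real.pi) Real.pi).indicator
          (fun p : ℝ × ℝ => p.1 * f (circleMap c p.1 p.2)) p := by
        rw [← Complex.integral_comp_polarCoord_symm]
        refine setIntegral_congr_fun polarCoord.open_target.measurableSet fun p hp => ?_
        obtain ⟨hp1, hp2⟩ : 0 < p.1 ∧ p.2 ∈ Ioo (-Real.pi) Real.pi := hp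
        have hcm : c + Complex.polarCoord.symm p = circleMap c p.1 p.2 := by
          rw [Complex.polarCoord_symm_apply, circleMap, Complex.exp_mul_I]
          push_cast; rfl
        have hiff : circleMap c p.1 p.2 ∈ closedBall c R ↔
            p ∈ Ioc 0 R ×ˢ Ioo (-Real.pi) Real.pi := by
          simp [circleMap, abs_of_pos hp1, mem_prod, hp1, hp2.1, hp2.2]
        simp only [hcm, smul_eq_mul, indicator, hiff]
        split_ifs <;> simp
    _ = ∫ p in Ioc 0 R ×ˢ Ioo (-Real.pi) Real.pi, p.1 * f (circleMap c p.1 p.2) := by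
        rw [setIntegral_indicator (measurableSet_Ioc.prod measurableSet_Ioo),
          inter_eq_right.mpr]
        exact prod_mono Ioc_subset_Ioi_self le_rfl
    _ = _ := by
        rw [Measure.volume_eq_prod, setIntegral_prod _ hint,
          intervalIntegral.integral_of_le hR]
        refine setIntegral_congr_fun measurableSet_Ioc fun s _ => ?_
        simp only [integral_const_mul]
        rw [intervalIntegral.integral_of_le (by linarith [Real.pi_pos]),
          integral_Ioc_eq_integral_Ioo]

/-- A circle-wise upper bound on the averages of `f` gives an upper bound on its area integral. -/
theorem setIntegral_closedBall_le_of_integral_circleMap_le {f : ℂ → ℝ} {c : ℂ} {R a b : ℝ}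
    (hR : 0 ≤ R) (hf : ContinuousOn f (closedBall c R))
    (h : ∀ s ∈ Icc 0 R, ∫ θ in -Real.pi..Real.pi, f (circleMap c s θ) ≤ a + b * s ^ 2) :
    ∫ z in closedBall c R, f z ≤ a * R ^ 2 / 2 + b * R ^ 4 / 4 := by
  have hint : IntervalIntegrable
      (fun s => s * ∫ θ in -Real.pi..Real.pi, f (circleMap c s θ)) volume 0 R := by
    rw [intervalIntegrable_iff_integrableOn_Ioc_of_le hR]
    have := integrableOn_polar hf
    rw [IntegrableOn, Measure.volume_eq_prod, ← Measure.prod_restrict] at this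
    refine this.integral_prod_left.congr (.of_forall fun s => ?_)
    simp only [integral_const_mul]
    rw [intervalIntegral.integral_of_le (by linarith [Real.pi_pos]),
      integral_Ioc_eq_integral_Ioo]
  have hint' : Continuous fun s : ℝ => a * s + b * s ^ 3 := by fun_prop
  calc ∫ z in closedBall c R, f z
      = ∫ s in 0..R, s * ∫ θ in -Real.pi..Real.pi, f (circleMap c s θ) :=
        setIntegral_closedBall_eq_polar hR hf
    _ ≤ ∫ s in 0..R, (a * s + b * s ^ 3) := by
        refine intervalIntegral.integral_mono_on hR hint (hint'.intervalIntegrable _ _)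
          fun s hs => ?_
        linarith [mul_le_mul_of_nonneg_left (h s hs) hs.1]
    _ = a * R ^ 2 / 2 + b * R ^ 4 / 4 := by
        rw [intervalIntegral.integral_add (Continuous.intervalIntegrable (by fun_prop) _ _)
          (Continuous.intervalIntegrable (by fun_prop) _ _),
          intervalIntegral.integral_const_mul, intervalIntegral.integral_const_mul,
          integral_id, integral_pow]
        push_cast; ring

/-- Area mean value inequality for a function whose Laplacian is bounded above. -/
theorem setIntegral_closedBall_le_of_laplacian_le {u : ℂ → ℝ} {c : ℂ} {R ρ M : ℝ} (hρ : 0 ≤ ρ)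
    (hρR : ρ < R) (hu : ContDiffOn ℝ 2 u (ball c R))
    (hΔ : ∀ z ∈ ball c R, fderiv ℝ (fderiv ℝ u) z 1 1
      + fderiv ℝ (fderiv ℝ u) z Complex.I Complex.I ≤ M) :
    ∫ z in closedBall c ρ, u z ≤ Real.pi * ρ ^ 2 * u c + Real.pi * M * ρ ^ 4 / 8 := by
  refine (setIntegral_closedBall_le_of_integral_circleMap_le (a := 2 * Real.pi * u c)
    (b := Real.pi * M / 2) hρ (hu.continuousOn.mono (closedBall_subset_ball hρR))
    fun s hs => ?_).trans_eq (by ring)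
  exact (integral_circleMap_le hu hΔ ⟨hs.1, hs.2.trans_lt hρR⟩).trans_eq (by ring)

/-- Harnack-type lower bound: for every `M ≥ 0` and `r ∈ (0,1)` there is `K ≥ 0`
such that any function on the unit disk that is bounded above by `M`, has Laplacian
bounded by `M` in absolute value, and satisfies `h(0) ≥ −M`, is bounded below by
`−K` on the closed disk of radius `r`. -/
theorem stmt_11 (M : ℝ) (hM : 0 ≤ M) (r : ℝ) (hr : r ∈ Set.Ioo (0:ℝ) 1) :
    ∃ K : ℝ, 0 ≤ K ∧
      ∀ h : ℂ → ℝ,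
        ContDiffOn ℝ 2 h (Metric.ball (0:ℂ) 1) →
        (∀ z : ℂ, ‖z‖ < 1 → h z ≤ M) →
        (∀ z : ℂ, ‖z‖ < 1 →
          |fderiv ℝ (fun w => fderiv ℝ h w 1) z 1
            + fderiv ℝ (fun w => fderiv ℝ h w Complex.I) z Complex.I| ≤ M) →
        -M ≤ h 0 →
        ∀ z : ℂ, ‖z‖ ≤ r → -K ≤ h z := by
  obtain ⟨hr0, hr1⟩ := hr
  set δ : ℝ := (1 - r) / 2 with hδ
  have hδ0 : 0 < δ := by linarith
  refine ⟨3 * M / δ ^ 2, by positivity, fun h hh hle hlap h0 z hz => ?_⟩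
  have hD : DifferentiableOn ℝ (fderiv ℝ h) (ball 0 1) :=
    (hh.fderiv_of_isOpen (m := 1) isOpen_ball (by norm_num)).differentiableOn (by norm_num)
  have hlap' : ∀ w ∈ ball (0 : ℂ) 1, |fderiv ℝ (fderiv ℝ h) w 1 1
      + fderiv ℝ (fderiv ℝ h) w Complex.I Complex.I| ≤ M := fun w hw => by
    have happ : ∀ v, fderiv ℝ (fun w => fderiv ℝ h w v) w v = fderiv ℝ (fderiv ℝ h) w v v :=
      fun v => by
        rw [fderiv_clm_apply (hD.differentiableAt (isOpen_ball.mem_nhds hw))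
          (differentiableAt_const v)]
        simp
    simpa only [happ] using hlap w (by simpa using hw)
  set u : ℂ → ℝ := fun w => M - h w with hu
  have hu2 : ContDiffOn ℝ 2 u (ball 0 1) := contDiffOn_const.sub hh
  have hDu : fderiv ℝ (fderiv ℝ u) = fun w => -fderiv ℝ (fderiv ℝ h) w := by
    have : fderiv ℝ u = fun w => -fderiv ℝ h w := funext fun w => fderiv_const_sub M
    rw [this]
    exact funext fun w => fderiv_fun_neg
  have hball : ball z (2 * δ) ⊆ ball 0 1 := ball_subset_ball' (by
    rw [dist_zero_right]; linarith)
  have hsub : closedBall z δ ⊆ closedBall 0 (1 - δ) := closedBall_subset_closedBall' (by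
    rw [dist_zero_right]; linarith)
  have hsub1 : closedBall (0 : ℂ) (1 - δ) ⊆ ball 0 1 := closedBall_subset_ball (by linarith)
  have hupper : ∫ w in closedBall (0 : ℂ) (1 - δ), u w ≤
      Real.pi * (1 - δ) ^ 2 * u 0 + Real.pi * M * (1 - δ) ^ 4 / 8 :=
    setIntegral_closedBall_le_of_laplacian_le (by linarith) (by linarith) hu2 fun w hw => by
      have := neg_le_of_abs_le (hlap' w hw)
      simp only [hDu, neg_apply]
      linarith
  have hlower : ∫ w in closedBall z δ, -u w ≤
      Real.pi * δ ^ 2 * (-u z) + Real.pi * M * δ ^ 4 / 8 :=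
    setIntegral_closedBall_le_of_laplacian_le (u := fun w => -u w) hδ0.le (by linarith)
      (hu2.neg.mono hball) fun w hw => by
        have := le_of_abs_le (hlap' w (hball hw))
        have hneg : fderiv ℝ (fderiv ℝ fun w => -u w) = fun w => fderiv ℝ (fderiv ℝ h) w := by
          have : (fderiv ℝ fun w => -u w) = fun w => -fderiv ℝ u w :=
            funext fun w => fderiv_fun_neg
          rw [this]
          exact funext fun w => by rw [fderiv_fun_neg, hDu, neg_neg]
        simpa only [hneg] using this
  have hmono : ∫ w in closedBall z δ, u w ≤ ∫ w in closedBall (0 : ℂ) (1 - δ), u w := by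
    refine setIntegral_mono_set ((hu2.continuousOn.mono hsub1).integrableOn_compact
      (isCompact_closedBall _ _)) ?_ hsub.eventuallyLE
    refine (ae_restrict_mem measurableSet_closedBall).mono fun w hw => ?_
    have := hle w (by simpa using hsub1 hw)
    simpa [hu] using this
  rw [integral_neg] at hlower
  have hu0 : u 0 ≤ 2 * M := by simp only [hu]; linarith
  have hδ1 : δ ≤ 1 := by linarith
  have h1 : (1 - δ) ^ 2 * u 0 ≤ 1 * (2 * M) := by
    have : 0 ≤ u 0 := by simpa [hu] using hle 0 (by simp)
    gcongr
    exact pow_le_one₀ (by linarith) (by linarith)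
  have h2 : M * (1 - δ) ^ 4 ≤ M * 1 := by
    gcongr
    exact pow_le_one₀ (by linarith) (by linarith)
  have h3 : M * δ ^ 4 ≤ M * 1 := by
    gcongr
    exact pow_le_one₀ hδ0.le hδ1
  have h4 : Real.pi * (δ ^ 2 * u z) ≤ Real.pi * (3 * M) := by
    nlinarith [mul_le_mul_of_nonneg_left h1 Real.pi_pos.le,
      mul_le_mul_of_nonneg_left h2 Real.pi_pos.le, mul_le_mul_of_nonneg_left h3 Real.pi_pos.le,
      mul_nonneg Real.pi_pos.le hM]
  have h5 : u z ≤ 3 * M / δ ^ 2 := by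
    rw [le_div_iff₀' (by positivity)]
    exact le_of_mul_le_mul_left h4 Real.pi_pos
  have h7 : h z = M - u z := by simp [hu]
  linarith
end
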